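/- arXiv:math/0401205 — 2 statements merged into one kernel-verified Lean document; each statement's English description precedes it below -/
import Mathlib

section
/- Let α > 0 and n > α/π. With ρ_{α,n}, μ_{α,n}, ψ_{α,n} as in the context and b_{α,n}(x) = √((1+ρ_{α,n}x)/(1−ρ_{α,n}x)) on (−1,1), any bounded operator I + H(ψ_{α,n}) on ℓ²(ℕ) (with entries δ_{jk} + [ψ_{α,n}]_{j+k+1}) is invertible, and det H_n[b_{α,n}] = det[P_n (I + H(ψ_{α,n}))^{−1} P_n]. -/
open Filter MeasureTheory
open scoped InnerProductSpace

noncomputable section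

/-- ℓ²(ℕ) over ℂ. -/
abbrev l2 : Type := lp (fun _ : ℕ => ℂ) 2

/-- The `k`-th Fourier coefficient of a function on the unit circle, given as a
`2π`-periodic function of the angle: `a_k = (1/(2π)) ∫_0^{2π} f(θ) e^{-ikθ} dθ`. -/
def fc (f : ℝ → ℂ) (k : ℤ) : ℂ :=
  ((1 / (2 * Real.pi) : ℝ) : ℂ) *
    ∫ θ in (0:ℝ)..(2 * Real.pi), f θ * Complex.exp (-(Complex.I * k * θ))

/-- The standard orthonormal basis vector `e_j` of ℓ²(ℕ). -/
def ee (j : ℕ) : l2 := lp.single 2 j 1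

/-- Matrix entry `⟨e_j, A e_k⟩` of an operator on ℓ²(ℕ). -/
def ent (A : l2 →L[ℂ] l2) (j k : ℕ) : ℂ := ⟪ee j, A (ee k)⟫_ℂ

/-- The function `χ` on the circle: `χ(e^{iθ}) = i` for `0 < θ < π` and
`χ(e^{iθ}) = −i` for `−π < θ < 0`. -/
def chi (θ : ℝ) : ℂ := if 0 < Real.sin θ then Complex.I else -Complex.I

/-- The real Hankel-matrix entry `(1/π) ∫_{-1}^1 b(x)(2x)^e dx`. -/
def bmomR (b : ℝ → ℝ) (e : ℕ) : ℝ :=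
  (1 / Real.pi) * ∫ x in (-1:ℝ)..1, b x * (2 * x) ^ e

lemma inner_ee_left (j : ℕ) (x : l2) : ⟪ee j, x⟫_ℂ = x j := by
  simp [ee, lp.inner_single_left]

lemma eq_of_inner_ee {x y : l2} (h : ∀ j, ⟪ee j, x⟫_ℂ = ⟪ee j, y⟫_ℂ) : x = y := by
  ext j
  simpa only [inner_ee_left] using h j

lemma inner_linearCombination_eq {K : Type*} [NormedAddCommGroup K] [InnerProductSpace ℂ K]
    (A : l2 →L[ℂ] l2) (r : ℕ → K) (hr : ∀ j k, ⟪r j, r k⟫_ℂ = ent A j k) (f g : ℕ →₀ ℂ) :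
    ⟪Finsupp.linearCombination ℂ r f, Finsupp.linearCombination ℂ r g⟫_ℂ =
      ⟪Finsupp.linearCombination ℂ ee f, A (Finsupp.linearCombination ℂ ee g)⟫_ℂ := by
  simp only [Finsupp.linearCombination_apply, Finsupp.sum, map_sum, map_smul, sum_inner, inner_sum,
    inner_smul_left, inner_smul_right, hr, ent]

/-- If `A ≥ 1` is the Gram operator of a sequence `r` with dense span, then every vector of the
ambient space is, in the limit, a combination of the `r j` with square-summable coefficients. -/
lemma exists_tendsto_linearCombination {K : Type*} [NormedAddCommGroup K] [InnerProductSpace ℂ K]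
    (A : l2 →L[ℂ] l2) (hA : ∀ x, ‖x‖ ^ 2 ≤ (⟪x, A x⟫_ℂ).re) (r : ℕ → K)
    (hr : ∀ j k, ⟪r j, r k⟫_ℂ = ent A j k)
    (hd : (Submodule.span ℂ (Set.range r)).topologicalClosure = ⊤) (p : K) :
    ∃ (v : l2) (f : ℕ → ℕ →₀ ℂ),
      Tendsto (fun m => Finsupp.linearCombination ℂ r (f m)) atTop (nhds p) ∧
      Tendsto (fun m => Finsupp.linearCombination ℂ ee (f m)) atTop (nhds v) := by
  have hp : p ∈ closure ((Submodule.span ℂ (Set.range r) : Submodule ℂ K) : Set K) := by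
    rw [← Submodule.topologicalClosure_coe, hd]
    trivial
  obtain ⟨u, hu, hlim⟩ := mem_closure_iff_seq_limit.1 hp
  have hu' : ∀ m, ∃ f : ℕ →₀ ℂ, Finsupp.linearCombination ℂ r f = u m := fun m => by
    simpa [Finsupp.linearCombination_apply] using Finsupp.mem_span_range_iff_exists_finsupp.1 (hu m)
  choose f hf using hu'
  have hle : ∀ g : ℕ →₀ ℂ, ‖Finsupp.linearCombination ℂ ee g‖ ≤
      ‖Finsupp.linearCombination ℂ r g‖ := fun g => by
    have h1 := hA (Finsupp.linearCombination ℂ ee g)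
    rw [← inner_linearCombination_eq A r hr, inner_self_eq_norm_sq_to_K] at h1
    norm_cast at h1
    exact le_of_sq_le_sq h1 (norm_nonneg _)
  have hc : CauchySeq (fun m => Finsupp.linearCombination ℂ ee (f m)) := by
    rw [Metric.cauchySeq_iff]
    intro ε hε
    obtain ⟨N, hN⟩ := Metric.cauchySeq_iff.1 hlim.cauchySeq ε hε
    refine ⟨N, fun m hm k hk => ?_⟩
    refine lt_of_le_of_lt ?_ (hN m hm k hk)
    rw [dist_eq_norm, dist_eq_norm, ← map_sub, ← hf, ← hf, ← map_sub]
    exact hle _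
  obtain ⟨v, hv⟩ := cauchySeq_tendsto_of_complete hc
  exact ⟨v, f, by simpa only [hf] using hlim, hv⟩

lemma isUnit_of_sq_norm_le (A : l2 →L[ℂ] l2) (hA : ∀ x, ‖x‖ ^ 2 ≤ (⟪x, A x⟫_ℂ).re) : IsUnit A := by
  refine ContinuousLinearMap.isUnit_of_forall_le_norm_inner_map A (c := 1) one_pos fun x => ?_
  rw [← inner_conj_symm, RCLike.norm_conj]
  simpa using (hA x).trans (Complex.re_le_norm _)

lemma sq_norm_le_of_forall_sum (A : l2 →L[ℂ] l2) (h : ℕ → ℂ)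
    (hA : ∀ j k : ℕ, ent A j k = (if j = k then 1 else 0) + h (j + k))
    (hpos : ∀ (s : Finset ℕ) (c : ℕ → ℂ),
      0 ≤ (∑ j ∈ s, ∑ k ∈ s, (starRingEnd ℂ) (c j) * c k * h (j + k)).re) (x : l2) :
    ‖x‖ ^ 2 ≤ (⟪x, A x⟫_ℂ).re := by
  have hsum : HasSum (fun i => x i • ee i) x := by
    have := lp.hasSum_single (p := 2) (by simp) x
    refine this.congr_fun ?_ 
    intro i
    simp [ee, ← lp.single_smul]
  have hcl : IsClosed {y : l2 | ‖y‖ ^ 2 ≤ (⟪y, A y⟫_ℂ).re} := by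
    apply isClosed_le <;> fun_prop
  refine hcl.mem_of_tendsto hsum (Eventually.of_forall fun s => ?_)
  have hee : ∀ j k, ⟪ee j, ee k⟫_ℂ = if j = k then 1 else 0 := fun j k => by
    rw [inner_ee_left]
    simp [ee, Pi.single_apply]
  have h1 : ⟪∑ i ∈ s, x i • ee i, A (∑ i ∈ s, x i • ee i)⟫_ℂ =
      ⟪∑ i ∈ s, x i • ee i, ∑ i ∈ s, x i • ee i⟫_ℂ +
        ∑ j ∈ s, ∑ k ∈ s, (starRingEnd ℂ) (x j) * x k * h (j + k) := by
    simp only [map_sum, map_smul, sum_inner, inner_sum, inner_smul_left, inner_smul_right, hee,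
      Finset.mul_sum]
    rw [Finset.sum_comm (s := s) (t := s) (f := fun j k => x j * _),
      Finset.sum_comm (s := s) (t := s) (f := fun j k => x j * _)]
    simp only [← Finset.sum_add_distrib]
    refine Finset.sum_congr rfl fun j _ => Finset.sum_congr rfl fun k _ => ?_
    have := hA j k
    rw [ent] at this
    rw [this]
    ring
  rw [Set.mem_ofPred_eq]
  have h2 : (⟪∑ i ∈ s, x i • ee i, ∑ i ∈ s, x i • ee i⟫_ℂ).re = ‖∑ i ∈ s, x i • ee i‖ ^ 2 :=
    inner_self_eq_norm_sq (𝕜 := ℂ) _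
  rw [h1, Complex.add_re, h2]
  have := hpos s x
  linarith

/-- The determinant of a Gram matrix of vectors whose coordinates against `r` are unitriangular is
the determinant of a corner of the inverse of the Gram operator of `r`. -/
lemma det_gram_eq_det_inverse {K : Type*} [NormedAddCommGroup K] [InnerProductSpace ℂ K]
    (A A' : l2 →L[ℂ] l2) (hA'A : A' ∘L A = 1)
    (hA : ∀ x, ‖x‖ ^ 2 ≤ (⟪x, A x⟫_ℂ).re) (r : ℕ → K)
    (hr : ∀ j k, ⟪r j, r k⟫_ℂ = ent A j k)
    (hd : (Submodule.span ℂ (Set.range r)).topologicalClosure = ⊤) (p : ℕ → K)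
    (hp0 : ∀ j l, l < j → ⟪r j, p l⟫_ℂ = 0) (hp1 : ∀ j, ⟪r j, p j⟫_ℂ = 1) (n : ℕ) :
    (Matrix.of fun j k : Fin n => ⟪p j, p k⟫_ℂ).det =
      (Matrix.of fun j k : Fin n => ent A' j k).det := by
  choose v f hRf hJf using exists_tendsto_linearCombination A hA r hr hd
  have hAJ : ∀ q, Tendsto (fun m => A (Finsupp.linearCombination ℂ ee (f q m))) atTop
      (nhds (A (v q))) := fun q => (A.continuous.tendsto _).comp (hJf q)
  have hrv : ∀ j q, ⟪r j, q⟫_ℂ = ⟪ee j, A (v q)⟫_ℂ := fun j q => by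
    refine tendsto_nhds_unique (tendsto_const_nhds.inner (hRf q)) ?_
    refine (tendsto_const_nhds.inner (hAJ q)).congr fun m => ?_
    have := inner_linearCombination_eq A r hr (Finsupp.single j 1) (f q m)
    simpa using this.symm
  have hvv : ∀ q q', ⟪q, q'⟫_ℂ = ⟪v q, A (v q')⟫_ℂ := fun q q' => by
    refine tendsto_nhds_unique ((hRf q).inner (hRf q')) ?_
    exact ((hJf q).inner (hAJ q')).congr fun m =>
      (inner_linearCombination_eq A r hr (f q m) (f q' m)).symm
  let B : Matrix (Fin n) (Fin n) ℂ := Matrix.of fun j l => ⟪r j, p l⟫_ℂ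
  have hAv : ∀ l : Fin n, A (v (p l)) = ∑ j : Fin n, B j l • ee j := fun l => by
    refine eq_of_inner_ee fun j => ?_
    rw [← hrv, inner_sum]
    simp only [inner_smul_right, inner_ee_left]
    simp only [ee, lp.single_apply, Pi.single_apply]
    by_cases hj : j < n
    · rw [Finset.sum_eq_single ⟨j, hj⟩]
      · simp [B]
      · intro b _ hb
        have : j ≠ b := fun h => hb (Fin.ext h.symm)
        simp [this]
      · simp
    · rw [hp0 j l (by omega), Finset.sum_eq_zero]
      intro b _
      have : j ≠ b := by omega
      simp [this]
  have hA'v : ∀ q, A' (A (v q)) = v q := fun q => by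
    rw [← ContinuousLinearMap.comp_apply, hA'A]; rfl
  have hdetB : B.det = 1 := by
    rw [Matrix.det_of_isUpperTriangular]
    · simp [B, hp1]
    · intro j l hlj
      exact hp0 _ _ hlj
  have hM : (Matrix.of fun j k : Fin n => ⟪p j, p k⟫_ℂ) =
      B.conjTranspose * (Matrix.of fun j k : Fin n => ent A' j k) * B := by
    ext m l
    have : ⟪p m, p l⟫_ℂ = ⟪A (v (p m)), A' (A (v (p l)))⟫_ℂ := by
      rw [hA'v, ← inner_conj_symm, hvv, inner_conj_symm]
    rw [Matrix.of_apply, this, hAv, hAv]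
    simp only [map_sum, map_smul, sum_inner, inner_sum, inner_smul_left, inner_smul_right,
      Matrix.mul_apply, Matrix.conjTranspose_apply, Matrix.of_apply, Finset.sum_mul, ent,
      RCLike.star_def, Finset.mul_sum]
    refine Finset.sum_congr rfl fun j _ => Finset.sum_congr rfl fun k _ => by ring!
  rw [hM, Matrix.det_mul, Matrix.det_mul, Matrix.det_conjTranspose, hdetB]
  simp

/-- The Möbius map `z ↦ (1 + μ z) / (1 - μ z)`. -/
def mob (μ : ℝ) (z : ℂ) : ℂ := (1 + μ * z) / (1 - μ * z)

/-- The principal square root, written as in the definition of `c₊`. -/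
def psqrt (z : ℂ) : ℂ := Complex.exp ((1 / 2 : ℂ) * Complex.log z)

lemma psqrt_sq {z : ℂ} (hz : z ≠ 0) : psqrt z ^ 2 = z := by
  rw [psqrt, ← Complex.exp_nat_mul]
  convert Complex.exp_log hz using 2
  push_cast
  ring

lemma psqrt_ne_zero (z : ℂ) : psqrt z ≠ 0 := Complex.exp_ne_zero _

lemma psqrt_re_nonneg (z : ℂ) : 0 ≤ (psqrt z).re := by
  have h1 : ((1 / 2 : ℂ) * Complex.log z).im = z.arg / 2 := by
    rw [show (1 / 2 : ℂ) = ((1 / 2 : ℝ) : ℂ) by simp, Complex.im_ofReal_mul, Complex.log_im]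
    ring
  rw [psqrt, Complex.exp_re, h1]
  refine mul_nonneg (Real.exp_pos _).le (Real.cos_nonneg_of_neg_pi_div_two_le_of_le ?_ ?_)
  · linarith [Complex.neg_pi_lt_arg z]
  · linarith [Complex.arg_le_pi z]

lemma differentiableAt_psqrt {z : ℂ} (hz : z ∈ Complex.slitPlane) :
    DifferentiableAt ℂ psqrt z := by
  unfold psqrt
  exact ((Complex.differentiableAt_log hz).const_mul _).cexp

lemma psqrt_conj {z : ℂ} (hz : z ∈ Complex.slitPlane) :
    psqrt ((starRingEnd ℂ) z) = (starRingEnd ℂ) (psqrt z) := by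
  rw [psqrt, psqrt, ← Complex.exp_conj, map_mul,
    Complex.log_conj _ (Complex.slitPlane_arg_ne_pi hz)]
  simp [map_ofNat]

lemma norm_psqrt_sq {z : ℂ} (hz : z ≠ 0) : ‖psqrt z‖ ^ 2 = ‖z‖ := by
  rw [← norm_pow, psqrt_sq hz]

lemma norm_mul_lt_one {μ : ℝ} (h0 : 0 ≤ μ) (h1 : μ < 1) {z : ℂ} (hz : ‖z‖ ≤ 1) :
    ‖(μ : ℂ) * z‖ < 1 := by
  rw [norm_mul, Complex.norm_real, Real.norm_of_nonneg h0]
  nlinarith [norm_nonneg z]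

lemma re_cayley_pos {w : ℂ} (hw : ‖w‖ < 1) : 0 < ((1 + w) / (1 - w)).re := by
  have hne : 1 - w ≠ 0 := by
    intro h
    have : w = 1 := by linear_combination -h
    simp [this] at hw
  have hsq : w.re ^ 2 + w.im ^ 2 < 1 := by
    have := Complex.sq_norm w
    rw [Complex.normSq_apply] at this
    nlinarith [norm_nonneg w]
  rw [Complex.div_re, ← add_div]
  refine div_pos ?_ (Complex.normSq_pos.2 hne)
  simp
  nlinarith

lemma mob_re_pos {μ : ℝ} (h0 : 0 ≤ μ) (h1 : μ < 1) {z : ℂ} (hz : ‖z‖ ≤ 1) : 0 < (mob μ z).re :=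
  re_cayley_pos (norm_mul_lt_one h0 h1 hz)

lemma one_sub_mul_ne_zero {μ : ℝ} (h0 : 0 ≤ μ) (h1 : μ < 1) {z : ℂ} (hz : ‖z‖ ≤ 1) :
    1 - (μ : ℂ) * z ≠ 0 := by
  intro h
  have h2 := norm_mul_lt_one h0 h1 hz
  rw [show (μ : ℂ) * z = 1 by linear_combination -h] at h2
  simp at h2

lemma mob_mem_slitPlane {μ : ℝ} (h0 : 0 ≤ μ) (h1 : μ < 1) {z : ℂ} (hz : ‖z‖ ≤ 1) :
    mob μ z ∈ Complex.slitPlane := Or.inl (mob_re_pos h0 h1 hz)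

/-- The function `c₊`. -/
def cp (μ : ℝ) (z : ℂ) : ℂ := psqrt (mob μ z)

lemma cp_conj {μ : ℝ} (h0 : 0 ≤ μ) (h1 : μ < 1) {z : ℂ} (hz : ‖z‖ ≤ 1) :
    cp μ ((starRingEnd ℂ) z) = (starRingEnd ℂ) (cp μ z) := by
  rw [cp, cp, ← psqrt_conj (mob_mem_slitPlane h0 h1 hz)]
  simp [mob]

lemma cp_sq {μ : ℝ} (h0 : 0 ≤ μ) (h1 : μ < 1) {z : ℂ} (hz : ‖z‖ ≤ 1) :
    cp μ z ^ 2 = mob μ z :=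
  psqrt_sq (Complex.slitPlane_ne_zero (mob_mem_slitPlane h0 h1 hz))

lemma cp_ne_zero (μ : ℝ) (z : ℂ) : cp μ z ≠ 0 := psqrt_ne_zero _

lemma differentiableAt_cp {μ : ℝ} (h0 : 0 ≤ μ) (h1 : μ < 1) {z : ℂ} (hz : ‖z‖ ≤ 1) :
    DifferentiableAt ℂ (cp μ) z := by
  have h2 := one_sub_mul_ne_zero h0 h1 hz
  have h3 : DifferentiableAt ℂ (mob μ) z := by
    unfold mob
    fun_prop (disch := assumption)
  exact (differentiableAt_psqrt (mob_mem_slitPlane h0 h1 hz)).comp z h3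

/-- The branch of `√(1 - z²)` on the closed unit disc with value `1` at the origin. -/
def rt (z : ℂ) : ℂ := (1 - z ^ 2) ^ (1 / 2 : ℂ)

lemma rt_sq (z : ℂ) : rt z ^ 2 = 1 - z ^ 2 := by
  rw [rt, ← Complex.cpow_nat_mul]
  simp

lemma re_one_sub_sq {z : ℂ} (hz : ‖z‖ ≤ 1) : 0 ≤ (1 - z ^ 2).re := by
  have : (z ^ 2).re ≤ 1 := (Complex.re_le_norm _).trans (by
    rw [norm_pow]
    exact pow_le_one₀ (norm_nonneg z) hz)
  simpa using this

lemma re_one_sub_sq_pos {z : ℂ} (hz : ‖z‖ < 1) : 0 < (1 - z ^ 2).re := by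
  have : (z ^ 2).re < 1 := (Complex.re_le_norm _).trans_lt (by
    rw [norm_pow]
    exact pow_lt_one₀ (norm_nonneg z) hz two_ne_zero)
  simpa using this

lemma continuousAt_rt {z : ℂ} (hz : ‖z‖ ≤ 1) : ContinuousAt rt z := by
  have h := Complex.continuousAt_cpow_const_of_re_pos (z := 1 - z ^ 2) (w := (1 / 2 : ℂ))
    (Or.inl (re_one_sub_sq hz)) (by norm_num)
  exact h.comp (f := fun z : ℂ => 1 - z ^ 2) (by fun_prop)

lemma differentiableAt_rt {z : ℂ} (hz : ‖z‖ < 1) : DifferentiableAt ℂ rt z := by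
  have h : (1 - z ^ 2) ∈ Complex.slitPlane := Or.inl (re_one_sub_sq_pos hz)
  unfold rt
  exact DifferentiableAt.cpow_const (by fun_prop) h

lemma rt_conj {z : ℂ} (hz : ‖z‖ ≤ 1) : rt ((starRingEnd ℂ) z) = (starRingEnd ℂ) (rt z) := by
  have h : (1 - z ^ 2).arg ≠ Real.pi := by
    intro h
    rw [Complex.arg_eq_pi_iff] at h
    linarith [re_one_sub_sq hz]
  have := Complex.conj_cpow (1 - z ^ 2) (1 / 2 : ℂ) h
  rw [rt, rt]
  simpa [map_ofNat] using this

/-- The function `c₊(z) √(1 - z²)`. -/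
def nn (μ : ℝ) (z : ℂ) : ℂ := cp μ z * rt z

/-- The function `√(1 - z²) / c₊(z)`. -/
def dd (μ : ℝ) (z : ℂ) : ℂ := rt z / cp μ z

lemma nn_mul_dd (μ : ℝ) (z : ℂ) : nn μ z * dd μ z = 1 - z ^ 2 := by
  rw [← rt_sq, nn, dd]
  field_simp [cp_ne_zero μ z]

lemma nn_conj {μ : ℝ} (h0 : 0 ≤ μ) (h1 : μ < 1) {z : ℂ} (hz : ‖z‖ ≤ 1) :
    nn μ ((starRingEnd ℂ) z) = (starRingEnd ℂ) (nn μ z) := by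
  rw [nn, nn, cp_conj h0 h1 hz, rt_conj hz, map_mul]

lemma dd_conj {μ : ℝ} (h0 : 0 ≤ μ) (h1 : μ < 1) {z : ℂ} (hz : ‖z‖ ≤ 1) :
    dd μ ((starRingEnd ℂ) z) = (starRingEnd ℂ) (dd μ z) := by
  rw [dd, dd, cp_conj h0 h1 hz, rt_conj hz, map_div₀]

lemma nn_zero (μ : ℝ) : nn μ 0 = 1 := by
  simp [nn, cp, rt, mob, psqrt]

lemma diffContOnCl_nn {μ : ℝ} (h0 : 0 ≤ μ) (h1 : μ < 1) :
    DiffContOnCl ℂ (nn μ) (Metric.ball 0 1) := by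
  refine ⟨fun z hz => ?_, fun z hz => ?_⟩
  · rw [mem_ball_zero_iff] at hz
    exact ((differentiableAt_cp h0 h1 hz.le).mul (differentiableAt_rt hz)).differentiableWithinAt
  · rw [closure_ball _ one_ne_zero, mem_closedBall_zero_iff] at hz
    exact ((differentiableAt_cp h0 h1 hz).continuousAt.mul (continuousAt_rt hz)).continuousWithinAt

lemma diffContOnCl_dd {μ : ℝ} (h0 : 0 ≤ μ) (h1 : μ < 1) :
    DiffContOnCl ℂ (dd μ) (Metric.ball 0 1) := by
  refine ⟨fun z hz => ?_, fun z hz => ?_⟩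
  · rw [mem_ball_zero_iff] at hz
    exact ((differentiableAt_rt hz).div (differentiableAt_cp h0 h1 hz.le)
      (cp_ne_zero μ z)).differentiableWithinAt
  · rw [closure_ball _ one_ne_zero, mem_closedBall_zero_iff] at hz
    exact ((continuousAt_rt hz).div (differentiableAt_cp h0 h1 hz).continuousAt
      (cp_ne_zero μ z)).continuousWithinAt

/-- The point `e^{iθ}` of the unit circle. -/
def ex (θ : ℝ) : ℂ := Complex.exp (Complex.I * θ)

lemma ex_re (θ : ℝ) : (ex θ).re = Real.cos θ := by
  rw [ex, mul_comm, Complex.exp_ofReal_mul_I_re]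

lemma ex_im (θ : ℝ) : (ex θ).im = Real.sin θ := by
  rw [ex, mul_comm, Complex.exp_ofReal_mul_I_im]

lemma norm_ex (θ : ℝ) : ‖ex θ‖ = 1 := by
  rw [ex, mul_comm, Complex.norm_exp_ofReal_mul_I]

lemma ex_ne_zero (θ : ℝ) : ex θ ≠ 0 := Complex.exp_ne_zero _

lemma continuous_ex : Continuous ex := by
  unfold ex
  fun_prop

lemma ex_neg (θ : ℝ) : ex (-θ) = (starRingEnd ℂ) (ex θ) := by
  rw [ex, ex, ← Complex.exp_conj]
  simp

lemma ex_mul_conj (θ : ℝ) : ex θ * (starRingEnd ℂ) (ex θ) = 1 := by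
  rw [Complex.mul_conj, Complex.normSq_eq_norm_sq, norm_ex]
  simp

lemma one_sub_ex_sq (θ : ℝ) : 1 - ex θ ^ 2 = -2 * Complex.I * ex θ * (Real.sin θ : ℝ) := by
  have h : ex θ - (starRingEnd ℂ) (ex θ) = 2 * Complex.I * (Real.sin θ : ℝ) := by
    rw [Complex.sub_conj, ex_im]
    push_cast
    ring
  linear_combination -(ex θ) * h - ex_mul_conj θ

lemma continuous_nn_ex {μ : ℝ} (h0 : 0 ≤ μ) (h1 : μ < 1) : Continuous fun θ => nn μ (ex θ) := by
  refine continuous_iff_continuousAt.2 fun θ => ?_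
  have h : ContinuousAt (nn μ) (ex θ) :=
    (differentiableAt_cp h0 h1 (norm_ex θ).le).continuousAt.mul (continuousAt_rt (norm_ex θ).le)
  exact h.comp continuous_ex.continuousAt

lemma sq_norm_nn_ex {μ : ℝ} (h0 : 0 ≤ μ) (h1 : μ < 1) {θ : ℝ} (hθ : 0 ≤ Real.sin θ) :
    ‖nn μ (ex θ)‖ ^ 2 = 2 * ‖mob μ (ex θ)‖ * Real.sin θ := by
  rw [nn, norm_mul, mul_pow, ← norm_pow, ← norm_pow, cp_sq h0 h1 (norm_ex θ).le, rt_sq,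
    one_sub_ex_sq]
  simp only [norm_mul, norm_neg, Complex.norm_I, norm_ex, Complex.norm_real,
    Real.norm_of_nonneg hθ, Complex.norm_ofNat]
  ring

lemma nn_ex_ne_zero {μ : ℝ} (h0 : 0 ≤ μ) (h1 : μ < 1) {θ : ℝ} (hθ : 0 < Real.sin θ) :
    nn μ (ex θ) ≠ 0 := by
  intro h
  have h2 := sq_norm_nn_ex h0 h1 hθ.le
  rw [h] at h2
  have h3 := Complex.slitPlane_ne_zero (mob_mem_slitPlane h0 h1 (norm_ex θ).le)
  have : 0 < ‖mob μ (ex θ)‖ := norm_pos_iff.2 h3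
  simp at h2
  rcases h2 with h2 | h2
  · exact h3 h2
  · linarith

lemma sq_norm_nn_ex_eq_sqrt {μ ρ : ℝ} (h0 : 0 ≤ μ) (h1 : μ < 1) (hρ : ρ * (1 + μ ^ 2) = 2 * μ)
    {θ : ℝ} (hθ : 0 ≤ Real.sin θ) :
    ‖nn μ (ex θ)‖ ^ 2 =
      2 * (Real.sqrt ((1 + ρ * Real.cos θ) / (1 - ρ * Real.cos θ)) * Real.sin θ) := by
  rw [sq_norm_nn_ex h0 h1 hθ, mul_assoc]
  congr 2
  rw [← Real.sqrt_sq (norm_nonneg (mob μ (ex θ)))]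
  congr 1
  have hcs := Real.sin_sq_add_cos_sq θ
  have hn : ∀ s : ℝ, ‖1 + (s : ℂ) * ex θ‖ ^ 2 = 1 + 2 * s * Real.cos θ + s ^ 2 := fun s => by
    rw [Complex.sq_norm, Complex.normSq_apply]
    simp only [Complex.add_re, Complex.add_im, Complex.one_re, Complex.one_im,
      Complex.re_ofReal_mul, Complex.im_ofReal_mul, ex_re, ex_im]
    linear_combination s ^ 2 * hcs
  have hm := hn (-μ)
  rw [show 1 + ((-μ : ℝ) : ℂ) * ex θ = 1 - μ * ex θ by push_cast; ring] at hm
  have hpos : 0 < 1 + 2 * (-μ) * Real.cos θ + (-μ) ^ 2 := by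
    rw [← hm]
    have := norm_pos_iff.2 (one_sub_mul_ne_zero h0 h1 (norm_ex θ).le)
    positivity
  rw [mob, norm_div, div_pow, hn, hm]
  have hq : (0 : ℝ) < 1 + μ ^ 2 := by positivity
  have hρ' : ρ = 2 * μ / (1 + μ ^ 2) := by field_simp; linarith
  have h2 : 1 - ρ * Real.cos θ = (1 + 2 * (-μ) * Real.cos θ + (-μ) ^ 2) / (1 + μ ^ 2) := by
    rw [hρ']; field_simp; ring
  have h3 : 1 + ρ * Real.cos θ = (1 + 2 * μ * Real.cos θ + μ ^ 2) / (1 + μ ^ 2) := by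
    rw [hρ']; field_simp; ring
  rw [h2, h3, div_div_div_cancel_right₀ hq.ne']

/-- The square of `c₊(z) / c₊(1/z)`. -/
def ks (μ : ℝ) (w : ℂ) : ℂ := (1 + μ * w) / (1 - μ * w) * ((w - μ) / (w + μ))

/-- The continuation of `c₊(z) / c₊(1/z)` to the upper half-plane. -/
def kap (μ : ℝ) (w : ℂ) : ℂ := psqrt (ks μ w)

lemma upper_ne {μ : ℝ} (w : ℂ) (hw : 0 < w.im) : 1 - (μ : ℂ) * w ≠ 0 ∧ w + μ ≠ 0 := by
  constructor
  · intro h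
    have h1 := congrArg Complex.im h
    have h2 := congrArg Complex.re h
    simp at h1 h2
    rcases h1 with h1 | h1
    · simp [h1] at h2
    · exact hw.ne' h1
  · intro h
    have h1 := congrArg Complex.im h
    simp at h1
    exact hw.ne' h1

lemma ks_mem_slitPlane {μ : ℝ} (h0 : 0 ≤ μ) (h1 : μ < 1) {w : ℂ} (hw : 0 < w.im) :
    ks μ w ∈ Complex.slitPlane := by
  obtain ⟨hne1, hne2⟩ := upper_ne (μ := μ) w hw
  by_contra hcon
  rw [Complex.mem_slitPlane_iff] at hcon
  push Not at hcon
  obtain ⟨hre, him⟩ := hcon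
  have hs : ks μ w = ((ks μ w).re : ℂ) := Complex.ext (by simp) (by simp [him])
  set t := -(ks μ w).re with ht
  have ht0 : 0 ≤ t := by linarith
  have hs' : ks μ w = -(t : ℂ) := by rw [hs, ht]; simp
  have heq : (1 + μ * w) * (w - μ) + t * ((1 - μ * w) * (w + μ)) = 0 := by
    rw [ks, div_mul_div_comm, div_eq_iff (mul_ne_zero hne1 hne2)] at hs'
    linear_combination hs'
  have e1 := congrArg Complex.re heq
  have e2 := congrArg Complex.im heq
  simp at e1 e2
  have hB : 0 < (1 - μ ^ 2) * (1 + t) := by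
    apply mul_pos <;> nlinarith
  have e3 : 2 * (μ * (1 - t)) * w.re + (1 - μ ^ 2) * (1 + t) = 0 := by
    apply mul_right_cancel₀ hw.ne'
    linear_combination e2
  have e4 : μ * (1 - t) * (w.re ^ 2 + w.im ^ 2 + 1) = 0 := by
    linear_combination w.re * e3 - e1
  have hA : μ * (1 - t) = 0 := by
    rcases mul_eq_zero.1 e4 with h | h
    · exact h
    · nlinarith
  rw [hA] at e3
  linarith

lemma differentiableAt_kap {μ : ℝ} (h0 : 0 ≤ μ) (h1 : μ < 1) {w : ℂ} (hw : 0 < w.im) :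
    DifferentiableAt ℂ (kap μ) w := by
  obtain ⟨hne1, hne2⟩ := upper_ne (μ := μ) w hw
  have h3 : DifferentiableAt ℂ (ks μ) w := by
    unfold ks
    fun_prop (disch := assumption)
  exact (differentiableAt_psqrt (ks_mem_slitPlane h0 h1 hw)).comp w h3

lemma kap_ex {μ : ℝ} (h0 : 0 ≤ μ) (h1 : μ < 1) {θ : ℝ} (hθ : 0 < Real.sin θ) :
    kap μ (ex θ) = cp μ (ex θ) / (starRingEnd ℂ) (cp μ (ex θ)) := by
  have him : 0 < (ex θ).im := by rwa [ex_im]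
  have hn := (norm_ex θ).le
  have hnc : ‖(starRingEnd ℂ) (ex θ)‖ ≤ 1 := by rwa [RCLike.norm_conj]
  obtain ⟨hne1, hne2⟩ := upper_ne (μ := μ) (ex θ) him
  have hsq : kap μ (ex θ) ^ 2 = (cp μ (ex θ) / (starRingEnd ℂ) (cp μ (ex θ))) ^ 2 := by
    rw [kap, psqrt_sq (Complex.slitPlane_ne_zero (ks_mem_slitPlane h0 h1 him)), div_pow,
      ← cp_conj h0 h1 hn, cp_sq h0 h1 hn, cp_sq h0 h1 hnc, ks, ← mob, div_eq_mul_inv (mob _ _)]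
    congr 1
    rw [mob, inv_div]
    have hc := one_sub_mul_ne_zero h0 h1 hnc
    have hd : 1 + (μ : ℂ) * (starRingEnd ℂ) (ex θ) ≠ 0 := by
      intro h
      apply hne2
      linear_combination ex θ * h - μ * ex_mul_conj θ
    rw [div_eq_div_iff hne2 hd]
    linear_combination (2 * μ) * ex_mul_conj θ
  have hre : 0 < (cp μ (ex θ) / (starRingEnd ℂ) (cp μ (ex θ))).re := by
    have hcn := cp_ne_zero μ (ex θ)
    have hpos : 0 < ‖cp μ (ex θ)‖ ^ 2 := by
      have := norm_pos_iff.2 hcn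
      positivity
    have : cp μ (ex θ) / (starRingEnd ℂ) (cp μ (ex θ)) =
        mob μ (ex θ) / ((‖cp μ (ex θ)‖ ^ 2 : ℝ) : ℂ) := by
      rw [← cp_sq h0 h1 hn, div_eq_div_iff ((map_ne_zero _).2 hcn) (by exact_mod_cast hpos.ne'),
        ← Complex.normSq_eq_norm_sq, ← Complex.mul_conj]
      ring
    rw [this, Complex.div_ofReal_re]
    exact div_pos (mob_re_pos h0 h1 hn) hpos
  rcases sq_eq_sq_iff_eq_or_eq_neg.1 hsq with h | h
  · exact h
  · have := psqrt_re_nonneg (ks μ (ex θ))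
    rw [← kap, h, Complex.neg_re] at this
    linarith

lemma nn_ex_sq {μ : ℝ} (h0 : 0 ≤ μ) (h1 : μ < 1) {θ : ℝ} (hθ : 0 < Real.sin θ) :
    nn μ (ex θ) ^ 2 = -Complex.I * kap μ (ex θ) * ex θ * (‖nn μ (ex θ)‖ ^ 2 : ℝ) := by
  have hn := (norm_ex θ).le
  have hrt : ‖rt (ex θ)‖ ^ 2 = 2 * Real.sin θ := by
    rw [← norm_pow, rt_sq, one_sub_ex_sq]
    simp only [norm_mul, norm_neg, Complex.norm_I, norm_ex, Complex.norm_real,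
      Real.norm_of_nonneg hθ.le, Complex.norm_ofNat]
    ring
  rw [kap_ex h0 h1 hθ, nn, norm_mul, mul_pow, mul_pow, hrt, rt_sq, one_sub_ex_sq,
    ← Complex.normSq_eq_norm_sq]
  push_cast
  rw [← Complex.mul_conj]
  have := (map_ne_zero (starRingEnd ℂ)).2 (cp_ne_zero μ (ex θ))
  field_simp

lemma ex_two_pi_sub (θ : ℝ) : ex (2 * Real.pi - θ) = (starRingEnd ℂ) (ex θ) := by
  rw [← ex_neg, ex, ex]
  refine Complex.exp_eq_exp_iff_exists_int.2 ⟨1, ?_⟩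
  push_cast
  ring

/-- The continuous function `-i c₊(z) c₊(1/z)⁻¹ z^{m+1}` on the unit circle. -/
def uu (μ : ℝ) (m : ℕ) (θ : ℝ) : ℂ :=
  -Complex.I * (cp μ (ex θ) / (starRingEnd ℂ) (cp μ (ex θ))) * ex θ ^ (m + 1)

lemma continuous_cp_ex {μ : ℝ} (h0 : 0 ≤ μ) (h1 : μ < 1) : Continuous fun θ => cp μ (ex θ) :=
  continuous_iff_continuousAt.2 fun θ =>
    (differentiableAt_cp h0 h1 (norm_ex θ).le).continuousAt.comp (f := ex)
      continuous_ex.continuousAt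

lemma continuous_uu {μ : ℝ} (h0 : 0 ≤ μ) (h1 : μ < 1) (m : ℕ) : Continuous (uu μ m) := by
  have h := continuous_cp_ex h0 h1
  unfold uu
  refine (continuous_const.mul (h.div (Complex.continuous_conj.comp h) fun θ => ?_)).mul
    (continuous_ex.pow _)
  exact (map_ne_zero _).2 (cp_ne_zero _ _)

lemma fc_eq_re_integral {μ : ℝ} (h0 : 0 ≤ μ) (h1 : μ < 1) (ψ : ℝ → ℂ)
    (hψ : ∀ θ : ℝ, ψ θ = cp μ (Complex.exp (-(Complex.I * θ))) *
      (cp μ (Complex.exp (Complex.I * θ)))⁻¹ * chi θ) (m : ℕ) :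
    fc ψ (m + 1) = (((1 / Real.pi) * (∫ θ in (0 : ℝ)..Real.pi, uu μ m θ).re : ℝ) : ℂ) := by
  have hex : ∀ θ : ℝ, Complex.exp (-(Complex.I * θ)) = (starRingEnd ℂ) (ex θ) := fun θ => by
    rw [← ex_neg, ex]
    congr 1
    push_cast
    ring
  have hpow : ∀ θ : ℝ, Complex.exp (-(Complex.I * ((m + 1 : ℤ) : ℂ) * θ)) =
      (starRingEnd ℂ) (ex θ) ^ (m + 1) := fun θ => by
    rw [← hex, ← Complex.exp_nat_mul]
    congr 1
    push_cast
    ring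
  have hI : ∀ θ : ℝ, ψ θ * Complex.exp (-(Complex.I * ((m + 1 : ℤ) : ℂ) * θ)) =
      (starRingEnd ℂ) (cp μ (ex θ)) * (cp μ (ex θ))⁻¹ * chi θ *
        (starRingEnd ℂ) (ex θ) ^ (m + 1) := fun θ => by
    rw [hψ, hpow, hex, cp_conj h0 h1 (norm_ex θ).le]
    rfl
  set g : ℝ → ℂ := fun θ => ψ θ * Complex.exp (-(Complex.I * ((m + 1 : ℤ) : ℂ) * θ)) with hg
  have hu := continuous_uu h0 h1 m
  have hcu : Continuous fun θ => (starRingEnd ℂ) (uu μ m θ) := Complex.continuous_conj.comp hu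
  have hgl : Set.EqOn g (fun θ => (starRingEnd ℂ) (uu μ m θ)) (Set.Ioo 0 Real.pi) := fun θ hθ => by
    have : 0 < Real.sin θ := Real.sin_pos_of_mem_Ioo hθ
    simp only [hg, hI, chi, this, if_true, uu, map_mul, map_pow, map_div₀, map_neg, Complex.conj_I,
      Complex.conj_conj]
    ring
  have hgr : Set.EqOn g (fun θ => uu μ m (2 * Real.pi - θ)) (Set.Ioo Real.pi (2 * Real.pi)) :=
    fun θ hθ => by
    have : ¬ 0 < Real.sin θ := by
      rw [not_lt, ← Real.sin_sub_two_pi]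
      exact Real.sin_nonpos_of_nonpos_of_neg_pi_le (by linarith [hθ.2]) (by linarith [hθ.1])
    simp only [hg, hI, chi, this, if_false, uu, ex_two_pi_sub, cp_conj h0 h1 (norm_ex θ).le,
      Complex.conj_conj]
    ring
  have hu2 : Continuous fun θ => uu μ m (2 * Real.pi - θ) := hu.comp (by fun_prop)
  have hpi := Real.pi_pos
  have il : IntervalIntegrable g volume 0 Real.pi := by
    refine (hcu.intervalIntegrable 0 Real.pi).congr_uIoo ?_
    rw [Set.uIoo_of_le hpi.le]
    exact hgl.symm
  have ir : IntervalIntegrable g volume Real.pi (2 * Real.pi) := by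
    refine (hu2.intervalIntegrable Real.pi (2 * Real.pi)).congr_uIoo ?_
    rw [Set.uIoo_of_le (by linarith)]
    exact hgr.symm
  have el : ∫ θ in (0 : ℝ)..Real.pi, g θ = ∫ θ in (0 : ℝ)..Real.pi, (starRingEnd ℂ) (uu μ m θ) := by
    refine intervalIntegral.integral_congr_uIoo ?_
    rw [Set.uIoo_of_le hpi.le]
    exact hgl
  have er : ∫ θ in Real.pi..(2 * Real.pi), g θ = ∫ θ in (0 : ℝ)..Real.pi, uu μ m θ := by
    rw [intervalIntegral.integral_congr_uIoo (g := fun θ => uu μ m (2 * Real.pi - θ)),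
      intervalIntegral.integral_comp_sub_left (fun θ => uu μ m θ)]
    · congr 1 <;> ring
    · rw [Set.uIoo_of_le (by linarith)]
      exact hgr
  have key : ∫ θ in (0 : ℝ)..(2 * Real.pi), g θ =
      ((2 * (∫ θ in (0 : ℝ)..Real.pi, uu μ m θ).re : ℝ) : ℂ) := by
    rw [← intervalIntegral.integral_add_adjacent_intervals il ir, el, er,
      intervalIntegral.intervalIntegral_eq_integral_uIoc,
      intervalIntegral.intervalIntegral_eq_integral_uIoc, integral_conj, ← Complex.add_conj]
    simp [hpi.le, add_comm]
  rw [fc, key, ← Complex.ofReal_mul]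
  congr 1
  field_simp

lemma kap_shift_integral {μ : ℝ} (h0 : 0 ≤ μ) (h1 : μ < 1) (m : ℕ) {δ : ℝ} (hδ : 0 < δ) :
    ∫ θ in (0 : ℝ)..Real.pi, -Complex.I * kap μ (ex θ + δ * Complex.I) * ex θ ^ (m + 1) =
      ∫ x in (-1 : ℝ)..1, kap μ (x + δ * Complex.I) * (x : ℂ) ^ m := by
  set T : ℝ := 1 / (2 * δ) with hT
  have hT0 : 0 < T := by positivity
  have hTδ : 2 * T * δ = 1 := by rw [hT]; field_simp
  set H : ℂ → ℂ := fun w => kap μ (w + δ * Complex.I) * w ^ m with hH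
  have hball : ∀ w : ℂ, w ∈ Metric.ball ((T : ℂ) * Complex.I) (T + δ) ↔
      w.re ^ 2 + (w.im - T) ^ 2 < (T + δ) ^ 2 := fun w => by
    rw [mem_ball_iff_norm, ← sq_lt_sq₀ (norm_nonneg _) (by positivity), Complex.sq_norm,
      Complex.normSq_apply]
    simp [sq]
  have hdiff : ∀ w ∈ Metric.ball ((T : ℂ) * Complex.I) (T + δ), DifferentiableAt ℂ H w := by
    intro w hw
    rw [hball] at hw
    have him : 0 < (w + δ * Complex.I).im := by
      simp
      nlinarith [sq_nonneg w.re]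
    have := differentiableAt_kap h0 h1 him
    have h2 : DifferentiableAt ℂ (fun w => kap μ (w + δ * Complex.I)) w :=
      this.comp w (f := fun w : ℂ => w + δ * Complex.I) (by fun_prop)
    exact h2.mul (by fun_prop)
  obtain ⟨P, hP⟩ := DifferentiableOn.isExactOn_ball
    fun w hw => (hdiff w hw).differentiableWithinAt
  have hmem : ∀ w : ℂ, ‖w‖ ≤ 1 → 0 ≤ w.im → w ∈ Metric.ball ((T : ℂ) * Complex.I) (T + δ) := by
    intro w hw him
    rw [hball]
    have := Complex.sq_norm w
    rw [Complex.normSq_apply] at this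
    nlinarith [norm_nonneg w]
  have hmx : ∀ x ∈ Set.uIcc (-1 : ℝ) 1, (x : ℂ) ∈ Metric.ball ((T : ℂ) * Complex.I) (T + δ) := by
    intro x hx
    rw [Set.uIcc_of_le (by norm_num)] at hx
    exact hmem _ (by simpa using abs_le.2 hx) (by simp)
  have hmθ : ∀ θ ∈ Set.uIcc 0 Real.pi, ex θ ∈ Metric.ball ((T : ℂ) * Complex.I) (T + δ) := by
    intro θ hθ
    rw [Set.uIcc_of_le Real.pi_pos.le] at hθ
    exact hmem _ (norm_ex θ).le (by rw [ex_im]; exact Real.sin_nonneg_of_mem_Icc hθ)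
  have hx : ∫ x in (-1 : ℝ)..1, H x = P 1 - P (-1) := by
    have := intervalIntegral.integral_eq_sub_of_hasDerivAt (a := -1) (b := 1)
      (f := fun x : ℝ => P x) (f' := fun x : ℝ => H x)
      (fun x hx => (hP x (hmx x hx)).comp_ofReal) ?_
    · simpa using this
    · refine ContinuousOn.intervalIntegrable fun x hx => ?_
      exact ((hdiff x (hmx x hx)).continuousAt.comp (f := fun x : ℝ => (x : ℂ))
        Complex.continuous_ofReal.continuousAt).continuousWithinAt
  have hθ : ∫ θ in (0 : ℝ)..Real.pi, H (ex θ) * (Complex.I * ex θ) = P (-1) - P 1 := by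
    have hd : ∀ θ : ℝ, HasDerivAt ex (Complex.I * ex θ) θ := fun θ => by
      have h := ((hasDerivAt_id θ).ofReal_comp.const_mul Complex.I).cexp
      simp only [id, Complex.ofReal_one, mul_one, mul_comm (Complex.exp _)] at h
      exact h
    have := intervalIntegral.integral_eq_sub_of_hasDerivAt (a := 0) (b := Real.pi)
      (f := fun θ : ℝ => P (ex θ)) (f' := fun θ : ℝ => H (ex θ) * (Complex.I * ex θ))
      (fun θ hθ => HasDerivAt.comp θ (hP _ (hmθ θ hθ)) (hd θ)) ?_
    · rw [this]
      simp [ex, mul_comm Complex.I, Complex.exp_pi_mul_I]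
    · refine ContinuousOn.intervalIntegrable fun θ hθ => ?_
      refine ContinuousAt.continuousWithinAt (ContinuousAt.mul ?_ ?_)
      · exact (hdiff _ (hmθ θ hθ)).continuousAt.comp continuous_ex.continuousAt
      · exact continuousAt_const.mul continuous_ex.continuousAt
  calc _ = ∫ θ in (0 : ℝ)..Real.pi, -(H (ex θ) * (Complex.I * ex θ)) := by
        refine intervalIntegral.integral_congr fun θ _ => ?_
        simp only [hH]
        ring
    _ = P 1 - P (-1) := by
        rw [intervalIntegral.integral_neg, hθ]
        ring
    _ = _ := hx.symm

lemma norm_ks_le {μ : ℝ} (h0 : 0 ≤ μ) (h1 : μ < 1) {δ : ℝ} (hδ : 0 < δ) (hδ1 : δ < (1 - μ) / 2)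
    {z : ℂ} (hz : ‖z‖ = 1) (him : 0 < z.im) :
    ‖ks μ (z + δ * Complex.I)‖ ≤ (9 / ((1 - μ) / 2)) / (1 - μ) := by
  set w := z + δ * Complex.I with hw
  have hδn : ‖(δ : ℂ) * Complex.I‖ = δ := by simp [abs_of_pos hδ]
  have hw1 : 1 ≤ ‖w‖ := by
    have h := Complex.sq_norm w
    have h' := Complex.sq_norm z
    rw [Complex.normSq_apply] at h h'
    simp [hw] at h
    rw [hz] at h'
    rw [← one_le_sq_iff₀ (norm_nonneg _)]
    simp only [hw]
    nlinarith
  have hw2 : ‖w‖ ≤ 1 + δ := by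
    have := norm_add_le z (δ * Complex.I)
    rwa [hz, hδn] at this
  have hμn : ‖(μ : ℂ)‖ = μ := by simp [abs_of_nonneg h0]
  have hμw : ‖(μ : ℂ) * w‖ = μ * ‖w‖ := by rw [norm_mul, hμn]
  have a1 : ‖1 + (μ : ℂ) * w‖ ≤ 3 := by
    have := norm_add_le 1 ((μ : ℂ) * w)
    rw [hμw, norm_one] at this
    nlinarith
  have a2 : (1 - μ) / 2 ≤ ‖1 - (μ : ℂ) * w‖ := by
    have := norm_sub_norm_le 1 ((μ : ℂ) * w)
    rw [hμw, norm_one] at this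
    nlinarith
  have a3 : ‖w - μ‖ ≤ 3 := by
    have := norm_sub_le w μ
    rw [hμn] at this
    linarith
  have a4 : 1 - μ ≤ ‖w + μ‖ := by
    have := norm_sub_norm_le w (-μ)
    rw [norm_neg, hμn, sub_neg_eq_add] at this
    linarith
  have hp : 0 < 1 - μ := by linarith
  rw [ks, norm_mul, norm_div, norm_div, div_mul_div_comm, div_div]
  refine div_le_div₀ (by norm_num) ?_ (by positivity) ?_
  · nlinarith [norm_nonneg (1 + (μ : ℂ) * w), norm_nonneg (w - μ)]
  · exact mul_le_mul a2 a4 hp.le (norm_nonneg _)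

lemma tendsto_kap_integral {μ : ℝ} (h0 : 0 ≤ μ) (h1 : μ < 1) (m : ℕ) :
    Tendsto (fun δ : ℝ => ∫ x in (-1 : ℝ)..1, kap μ (x + δ * Complex.I) * (x : ℂ) ^ m)
      (nhdsWithin 0 (Set.Ioi 0)) (nhds (∫ θ in (0 : ℝ)..Real.pi, uu μ m θ)) := by
  set C : ℝ := Real.sqrt ((9 / ((1 - μ) / 2)) / (1 - μ)) with hC
  have hev : ∀ᶠ δ : ℝ in nhdsWithin 0 (Set.Ioi 0), 0 < δ ∧ δ < (1 - μ) / 2 := by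
    have : Set.Ioo (0 : ℝ) ((1 - μ) / 2) ∈ nhdsWithin 0 (Set.Ioi 0) :=
      Ioo_mem_nhdsGT (by linarith)
    exact this
  have hne : ∀ᵐ θ : ℝ ∂volume, θ ≠ Real.pi := by simp [ae_iff]
  have hsin : ∀ θ : ℝ, θ ≠ Real.pi → θ ∈ Set.uIoc 0 Real.pi → 0 < Real.sin θ := by
    intro θ h hθ
    rw [Set.uIoc_of_le Real.pi_pos.le] at hθ
    exact Real.sin_pos_of_mem_Ioo ⟨hθ.1, lt_of_le_of_ne hθ.2 h⟩
  have hmain : Tendsto (fun δ : ℝ => ∫ θ in (0 : ℝ)..Real.pi,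
      -Complex.I * kap μ (ex θ + δ * Complex.I) * ex θ ^ (m + 1))
      (nhdsWithin 0 (Set.Ioi 0)) (nhds (∫ θ in (0 : ℝ)..Real.pi, uu μ m θ)) := by
    refine intervalIntegral.tendsto_integral_filter_of_dominated_convergence (fun _ => C) ?_ ?_
      intervalIntegrable_const ?_
    · filter_upwards [hev] with δ hδ
      refine ContinuousOn.aestronglyMeasurable (fun θ hθ => ?_) measurableSet_uIoc
      rw [Set.uIoc_of_le Real.pi_pos.le] at hθ
      have him : 0 < (ex θ + δ * Complex.I).im := by
        simp [ex_im]
        linarith [Real.sin_nonneg_of_mem_Icc ⟨hθ.1.le, hθ.2⟩, hδ.1]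
      refine ContinuousAt.continuousWithinAt (ContinuousAt.mul (continuousAt_const.mul ?_) ?_)
      · exact (differentiableAt_kap h0 h1 him).continuousAt.comp
          (f := fun θ => ex θ + δ * Complex.I) (by have := continuous_ex; fun_prop)
      · exact (continuous_ex.pow _).continuousAt
    · filter_upwards [hev] with δ hδ
      filter_upwards [hne] with θ hθ hθ'
      have hs := hsin θ hθ hθ'
      have him : 0 < (ex θ + δ * Complex.I).im := by
        simp [ex_im]
        linarith [hδ.1]
      rw [norm_mul, norm_mul, norm_neg, Complex.norm_I, norm_pow, norm_ex, one_pow, one_mul,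
        mul_one]
      refine Real.le_sqrt_of_sq_le ?_
      rw [kap, norm_psqrt_sq (Complex.slitPlane_ne_zero (ks_mem_slitPlane h0 h1 him))]
      exact norm_ks_le h0 h1 hδ.1 hδ.2 (norm_ex θ) (by rwa [ex_im])
    · filter_upwards [hne] with θ hθ hθ'
      have hs := hsin θ hθ hθ'
      rw [uu, ← kap_ex h0 h1 hs]
      refine Tendsto.mul (Tendsto.mul tendsto_const_nhds ?_) tendsto_const_nhds
      have hc := (differentiableAt_kap h0 h1 (w := ex θ) (by rwa [ex_im])).continuousAt
      refine hc.tendsto.comp ?_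
      have : Tendsto (fun δ : ℝ => ex θ + δ * Complex.I) (nhds 0)
          (nhds (ex θ + (0 : ℝ) * Complex.I)) :=
        Continuous.tendsto (by fun_prop) 0
      simpa using this.mono_left nhdsWithin_le_nhds
  refine hmain.congr' ?_
  filter_upwards [hev] with δ hδ using kap_shift_integral h0 h1 m hδ.1

lemma continuous_kap_shift {μ : ℝ} (h0 : 0 ≤ μ) (h1 : μ < 1) {δ : ℝ} (hδ : 0 < δ) :
    Continuous fun x : ℝ => kap μ (x + δ * Complex.I) := by
  refine continuous_iff_continuousAt.2 fun x => ?_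
  exact (differentiableAt_kap h0 h1 (by simpa using hδ)).continuousAt.comp
    (f := fun x : ℝ => (x : ℂ) + δ * Complex.I) (by fun_prop)

lemma sum_hankel_eq_integral (g : ℝ → ℝ) (hg : Continuous g) (s : Finset ℕ) (c : ℕ → ℂ) :
    ∑ j ∈ s, ∑ k ∈ s, (starRingEnd ℂ) (c j) * c k *
        ((∫ x in (-1 : ℝ)..1, g x * x ^ (j + k) : ℝ) : ℂ) =
      ((∫ x in (-1 : ℝ)..1, g x * ‖∑ k ∈ s, c k * (x : ℂ) ^ k‖ ^ 2 : ℝ) : ℂ) := by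
  have hint : ∀ j k : ℕ, IntervalIntegrable
      (fun x : ℝ => (starRingEnd ℂ) (c j) * c k * ((g x * x ^ (j + k) : ℝ) : ℂ)) volume (-1) 1 :=
    fun j k => Continuous.intervalIntegrable (by fun_prop) _ _
  simp only [← intervalIntegral.integral_ofReal, ← intervalIntegral.integral_const_mul]
  rw [Finset.sum_congr rfl fun j _ =>
    (intervalIntegral.integral_finsetSum (s := s) fun k _ => hint j k).symm,
    ← intervalIntegral.integral_finsetSum]
  · refine intervalIntegral.integral_congr fun x _ => ?_
    rw [Complex.ofReal_mul, ← Complex.normSq_eq_norm_sq, ← Complex.mul_conj, map_sum,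
      mul_comm (∑ k ∈ s, _), Finset.sum_mul_sum, Finset.mul_sum]
    refine Finset.sum_congr rfl fun j _ => ?_
    rw [Finset.mul_sum]
    refine Finset.sum_congr rfl fun k _ => ?_
    rw [map_mul, map_pow, Complex.conj_ofReal]
    push_cast
    ring
  · intro j _
    exact Continuous.intervalIntegrable (by fun_prop) _ _

lemma hankel_re_nonneg {μ : ℝ} (h0 : 0 ≤ μ) (h1 : μ < 1) (s : Finset ℕ) (c : ℕ → ℂ) :
    0 ≤ (∑ j ∈ s, ∑ k ∈ s, (starRingEnd ℂ) (c j) * c k *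
      (((1 / Real.pi) * (∫ θ in (0 : ℝ)..Real.pi, uu μ (j + k) θ).re : ℝ) : ℂ)).re := by
  have hlim : Tendsto (fun δ : ℝ => (∑ j ∈ s, ∑ k ∈ s, (starRingEnd ℂ) (c j) * c k *
      (((1 / Real.pi) * (∫ x in (-1 : ℝ)..1,
        kap μ (x + δ * Complex.I) * (x : ℂ) ^ (j + k)).re : ℝ) : ℂ)).re)
      (nhdsWithin 0 (Set.Ioi 0)) (nhds (∑ j ∈ s, ∑ k ∈ s, (starRingEnd ℂ) (c j) * c k *
      (((1 / Real.pi) * (∫ θ in (0 : ℝ)..Real.pi, uu μ (j + k) θ).re : ℝ) : ℂ)).re) := by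
    refine (Complex.continuous_re.tendsto _).comp ?_
    refine tendsto_finsetSum _ fun j _ => tendsto_finsetSum _ fun k _ => ?_
    refine Tendsto.mul tendsto_const_nhds ((Complex.continuous_ofReal.tendsto _).comp ?_)
    exact ((Complex.continuous_re.tendsto _).comp (tendsto_kap_integral h0 h1 (j + k))).const_mul _
  refine ge_of_tendsto hlim ?_
  filter_upwards [self_mem_nhdsWithin] with δ hδ
  have hc := continuous_kap_shift h0 h1 (δ := δ) hδ
  have hre : ∀ m : ℕ, (∫ x in (-1 : ℝ)..1, kap μ (x + δ * Complex.I) * (x : ℂ) ^ m).re =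
      ∫ x in (-1 : ℝ)..1, (kap μ (x + δ * Complex.I)).re * x ^ m := fun m => by
    have := Complex.reCLM.intervalIntegral_comp_comm (μ := volume) (a := -1) (b := 1)
      (f := fun x : ℝ => kap μ (x + δ * Complex.I) * (x : ℂ) ^ m)
      (Continuous.intervalIntegrable (by fun_prop) _ _)
    rw [Complex.reCLM_apply] at this
    rw [← this]
    refine intervalIntegral.integral_congr fun x _ => ?_
    simp only [Complex.reCLM_apply]
    rw [← Complex.ofReal_pow, Complex.re_mul_ofReal]
  have hsum := sum_hankel_eq_integral (fun x => (kap μ (x + δ * Complex.I)).re)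
    (Complex.continuous_re.comp hc) s c
  simp only [hre, Complex.ofReal_mul (1 / Real.pi)]
  simp only [mul_left_comm _ ((1 / Real.pi : ℝ) : ℂ), ← Finset.mul_sum]
  rw [hsum, ← Complex.ofReal_mul, Complex.ofReal_re]
  refine mul_nonneg (by positivity) (intervalIntegral.integral_nonneg (by norm_num) fun x _ => ?_)
  exact mul_nonneg (psqrt_re_nonneg _) (by positivity)

/-- A function continuous on the closed unit disc and holomorphic inside is a uniform limit of
polynomials. -/
lemma exists_polynomial_near_of_diffContOnCl {f : ℂ → ℂ}
    (hf : DiffContOnCl ℂ f (Metric.ball 0 1)) {ε : ℝ} (hε : 0 < ε) :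
    ∃ P : Polynomial ℂ, ∀ z : ℂ, ‖z‖ ≤ 1 → ‖f z - P.eval z‖ ≤ ε := by
  have hfc : ContinuousOn f (Metric.closedBall 0 1) := by
    simpa [closure_ball _ one_ne_zero] using hf.continuousOn
  have huc := (isCompact_closedBall (0 : ℂ) 1).uniformContinuousOn_of_continuous hfc
  obtain ⟨δ, hδ, hδf⟩ := Metric.uniformContinuousOn_iff.1 huc (ε / 2) (by positivity)
  obtain ⟨σ, hσ0, hσ⟩ : ∃ σ : ℝ, 0 < σ ∧ σ < min δ 1 := exists_between (by positivity)
  have hσδ := hσ.trans_le (min_le_left _ _)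
  have hσ1 := hσ.trans_le (min_le_right _ _)
  set t : ℝ := 1 - σ with ht
  let R : NNReal := ⟨1 - σ / 4, by linarith⟩
  let R' : NNReal := ⟨1 - σ / 2, by linarith⟩
  have hd : DifferentiableOn ℂ f (Metric.closedBall 0 R) :=
    hf.differentiableOn.mono (Metric.closedBall_subset_ball (show 1 - σ / 4 < 1 by linarith))
  have hp := hd.hasFPowerSeriesOnBall (show (0 : ℝ) < 1 - σ / 4 by linarith)
  set p := cauchyPowerSeries f 0 R
  have hRR : (R' : ENNReal) < R :=
    ENNReal.coe_lt_coe.2 (show 1 - σ / 2 < 1 - σ / 4 by linarith)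
  have hu := hp.tendstoUniformlyOn hRR
  rw [Metric.tendstoUniformlyOn_iff] at hu
  obtain ⟨m, hm⟩ := (hu (ε / 2) (by positivity)).exists
  refine ⟨∑ k ∈ Finset.range m, Polynomial.C (p.coeff k * (t : ℂ) ^ k) * Polynomial.X ^ k,
    fun z hz => ?_⟩
  have htn : ‖(t : ℂ)‖ = t := by
    rw [Complex.norm_real, Real.norm_of_nonneg (by linarith)]
  have htz : ‖(t : ℂ) * z‖ ≤ t := by
    rw [norm_mul, htn]
    exact mul_le_of_le_one_right (by linarith) hz
  have e1 : dist (f z) (f (t * z)) < ε / 2 := by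
    refine hδf z (by simpa using hz) _ (mem_closedBall_zero_iff.2 (by linarith)) ?_
    rw [dist_eq_norm, show z - t * z = (σ : ℂ) * z by rw [ht]; push_cast; ring, norm_mul,
      Complex.norm_real, Real.norm_of_nonneg hσ0.le]
    exact (mul_le_of_le_one_right hσ0.le hz).trans_lt hσδ
  have e2 := hm (t * z) (mem_ball_zero_iff.2
    (htz.trans_lt (show (1 : ℝ) - σ < 1 - σ / 2 by linarith)))
  rw [zero_add] at e2
  have e3 : p.partialSum m (t * z) =
      (∑ k ∈ Finset.range m, Polynomial.C (p.coeff k * (t : ℂ) ^ k) * Polynomial.X ^ k).eval z := by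
    rw [FormalMultilinearSeries.partialSum, Polynomial.eval_finsetSum]
    refine Finset.sum_congr rfl fun k _ => ?_
    rw [FormalMultilinearSeries.apply_eq_pow_smul_coeff]
    simp
    ring
  rw [← e3, ← dist_eq_norm]
  linarith [dist_triangle (f z) (f (t * z)) (p.partialSum m (t * z))]

/-- Lebesgue measure on `(0, π)`. -/
abbrev halfCircle : Measure ℝ := volume.restrict (Set.Ioo 0 Real.pi)

lemma ae_halfCircle_sin_pos : ∀ᵐ θ ∂halfCircle, 0 < Real.sin θ := by
  filter_upwards [ae_restrict_mem measurableSet_Ioo] with θ hθ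
  exact Real.sin_pos_of_mem_Ioo hθ

lemma eq_zero_of_forall_norm_le {x : ℂ} {C : ℝ} (hC : 0 ≤ C)
    (h : ∀ ε : ℝ, 0 < ε → ‖x‖ ≤ ε * C) : x = 0 := by
  rw [← norm_le_zero_iff]
  refine le_of_forall_pos_le_add fun ε hε => ?_
  have := h (ε / (C + 1)) (by positivity)
  refine this.trans ?_
  rw [div_mul_eq_mul_div, zero_add, div_le_iff₀ (by positivity)]
  nlinarith

/-- An integrable function on `(0, π)` orthogonal to all `sin (j θ)` vanishes almost everywhere. -/
lemma ae_eq_zero_of_integral_sin {f : ℝ → ℂ} (hf : Integrable f halfCircle)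
    (h : ∀ j : ℕ, ∫ θ, ((Real.sin (j * θ) : ℝ) : ℂ) * f θ ∂halfCircle = 0) :
    ∀ᵐ θ ∂halfCircle, f θ = 0 := by
  have hint : ∀ g : ℝ → ℝ, Continuous g →
      Integrable (fun θ => ((g θ : ℝ) : ℂ) * f θ) halfCircle := fun g hg => by
    obtain ⟨C, hC⟩ := isCompact_Icc.exists_bound_of_continuousOn (s := Set.Icc 0 Real.pi)
      hg.continuousOn
    refine hf.bdd_mul (c := C) (Complex.continuous_ofReal.comp hg).aestronglyMeasurable ?_
    filter_upwards [ae_restrict_mem measurableSet_Ioo] with θ hθ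
    simpa using hC θ ⟨hθ.1.le, hθ.2.le⟩
  have hcos : ∀ k j : ℕ,
      ∫ θ, ((Real.sin (j * θ) * Real.cos θ ^ k : ℝ) : ℂ) * f θ ∂halfCircle = 0 := by
    intro k
    induction k with
    | zero => simpa using h
    | succ k ih =>
      intro j
      rcases j with _ | j
      · simp
      have e : ∀ θ : ℝ, ((Real.sin ((j + 1 : ℕ) * θ) * Real.cos θ ^ (k + 1) : ℝ) : ℂ) * f θ =
          (1 / 2 : ℂ) * (((Real.sin ((j + 2 : ℕ) * θ) * Real.cos θ ^ k : ℝ) : ℂ) * f θ +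
            ((Real.sin (j * θ) * Real.cos θ ^ k : ℝ) : ℂ) * f θ) := fun θ => by
        have e1 : Real.sin ((j + 2 : ℕ) * θ) = Real.sin ((j + 1 : ℕ) * θ) * Real.cos θ +
            Real.cos ((j + 1 : ℕ) * θ) * Real.sin θ := by
          rw [← Real.sin_add]; congr 1; push_cast; ring
        have e2 : Real.sin (j * θ) = Real.sin ((j + 1 : ℕ) * θ) * Real.cos θ -
            Real.cos ((j + 1 : ℕ) * θ) * Real.sin θ := by
          rw [← Real.sin_sub]; congr 1; push_cast; ring
        rw [e1, e2]
        push_cast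
        ring
      simp only [e]
      rw [integral_const_mul, integral_add (hint _ (by fun_prop)) (hint _ (by fun_prop)), ih, ih]
      simp
  have hpoly : ∀ P : Polynomial ℝ,
      ∫ θ, ((Real.sin θ * P.eval (Real.cos θ) : ℝ) : ℂ) * f θ ∂halfCircle = 0 := fun P => by
    have e : ∀ θ : ℝ, ((Real.sin θ * P.eval (Real.cos θ) : ℝ) : ℂ) * f θ =
        ∑ k ∈ Finset.range (P.natDegree + 1), (P.coeff k : ℂ) *
          (((Real.sin ((1 : ℕ) * θ) * Real.cos θ ^ k : ℝ) : ℂ) * f θ) := fun θ => by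
      rw [Polynomial.eval_eq_sum_range, Finset.mul_sum, Complex.ofReal_sum, Finset.sum_mul]
      refine Finset.sum_congr rfl fun k _ => ?_
      push_cast
      rw [one_mul]
      ring
    simp only [e]
    rw [integral_finsetSum _ fun k _ => (hint _ (by fun_prop)).const_mul _]
    simp only [integral_const_mul, hcos, mul_zero, Finset.sum_const_zero]
  have hcont : ∀ g : ℝ → ℝ, Continuous g →
      ∫ θ, ((Real.sin θ * g θ : ℝ) : ℂ) * f θ ∂halfCircle = 0 := fun g hg => by
    refine eq_zero_of_forall_norm_le (C := ∫ θ, ‖f θ‖ ∂halfCircle)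
      (integral_nonneg fun _ => norm_nonneg _) fun ε hε => ?_
    obtain ⟨P, hP⟩ := exists_polynomial_near_of_continuousOn (-1) 1 (g ∘ Real.arccos)
      (hg.comp Real.continuous_arccos).continuousOn ε hε
    have hPc : Continuous fun θ : ℝ => P.eval (Real.cos θ) := P.continuous.comp Real.continuous_cos
    have e : ∫ θ, ((Real.sin θ * g θ : ℝ) : ℂ) * f θ ∂halfCircle =
        ∫ θ, ((Real.sin θ * (g θ - P.eval (Real.cos θ)) : ℝ) : ℂ) * f θ ∂halfCircle := by
      rw [← sub_zero (∫ θ, ((Real.sin θ * g θ : ℝ) : ℂ) * f θ ∂halfCircle), ← hpoly P,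
        ← integral_sub (hint _ (by fun_prop)) (hint _ (by fun_prop))]
      refine integral_congr_ae (Eventually.of_forall fun θ => ?_)
      simp only
      push_cast
      ring
    rw [e, ← integral_const_mul]
    refine norm_integral_le_of_norm_le (hf.norm.const_mul ε) ?_
    filter_upwards [ae_restrict_mem measurableSet_Ioo] with θ hθ
    rw [norm_mul]
    refine mul_le_mul_of_nonneg_right ?_ (norm_nonneg _)
    have h1 := hP (Real.cos θ) ⟨Real.neg_one_le_cos θ, Real.cos_le_one θ⟩
    rw [Function.comp_apply, Real.arccos_cos hθ.1.le hθ.2.le, abs_sub_comm] at h1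
    rw [Complex.norm_real, norm_mul]
    calc _ ≤ 1 * ε := mul_le_mul (Real.abs_sin_le_one θ) h1.le (abs_nonneg _) zero_le_one
      _ = ε := one_mul ε
  have hz := isOpen_Ioo.ae_eq_zero_of_integral_contDiff_smul_eq_zero (μ := volume)
    (U := Set.Ioo 0 Real.pi) (f := fun θ => ((Real.sin θ : ℝ) : ℂ) * f θ)
    ((show IntegrableOn _ _ _ from hint _ Real.continuous_sin).locallyIntegrableOn)
    fun g hg _ hgs => by
      rw [← hcont g hg.continuous, ← setIntegral_eq_integral_of_forall_compl_eq_zero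
        (s := Set.Ioo 0 Real.pi)]
      · refine integral_congr_ae (Eventually.of_forall fun θ => ?_)
        simp only [Complex.real_smul]
        push_cast
        ring
      · intro θ hθ
        rw [image_eq_zero_of_notMem_tsupport fun h' => hθ (hgs h'), zero_smul]
  filter_upwards [ae_restrict_of_ae hz, ae_restrict_mem measurableSet_Ioo] with θ hθ hm
  have hs := Real.sin_pos_of_mem_Ioo hm
  exact (mul_eq_zero.1 (hθ hm)).resolve_left (Complex.ofReal_ne_zero.2 hs.ne')

/-- The symmetrization `(F(z) n(z) + F(z̄) n(z̄)) / |n(z)|` on the upper half-circle. -/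
def symz (μ : ℝ) (F : ℂ → ℂ) (θ : ℝ) : ℂ :=
  (F (ex θ) * nn μ (ex θ) + F ((starRingEnd ℂ) (ex θ)) * (starRingEnd ℂ) (nn μ (ex θ))) /
    (‖nn μ (ex θ)‖ : ℂ)

lemma norm_symz_le (μ : ℝ) (F : ℂ → ℂ) {C : ℝ} (hF : ∀ z : ℂ, ‖z‖ ≤ 1 → ‖F z‖ ≤ C) (θ : ℝ) :
    ‖symz μ F θ‖ ≤ 2 * C := by
  have hn := (norm_ex θ).le
  have hnc : ‖(starRingEnd ℂ) (ex θ)‖ ≤ 1 := by rwa [RCLike.norm_conj]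
  have hC : 0 ≤ C := (norm_nonneg _).trans (hF _ hn)
  rw [symz, norm_div, Complex.norm_real, norm_norm]
  refine div_le_of_le_mul₀ (norm_nonneg _) (by positivity) ?_
  refine (norm_add_le _ _).trans ?_
  rw [norm_mul, norm_mul, RCLike.norm_conj]
  nlinarith [mul_le_mul_of_nonneg_right (hF _ hn) (norm_nonneg (nn μ (ex θ))),
    mul_le_mul_of_nonneg_right (hF _ hnc) (norm_nonneg (nn μ (ex θ)))]

lemma aestronglyMeasurable_symz {μ : ℝ} (h0 : 0 ≤ μ) (h1 : μ < 1) {F : ℂ → ℂ}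
    (hF : ContinuousOn F (Metric.closedBall 0 1)) :
    AEStronglyMeasurable (symz μ F) halfCircle := by
  have h := continuous_nn_ex h0 h1
  have hn : Continuous fun θ => F (ex θ) :=
    hF.comp_continuous continuous_ex fun θ => by simp [norm_ex]
  have hc : Continuous fun θ => F ((starRingEnd ℂ) (ex θ)) :=
    hF.comp_continuous (Complex.continuous_conj.comp continuous_ex) fun θ => by simp [norm_ex]
  refine (ContinuousOn.aestronglyMeasurable (fun θ hθ => ?_) measurableSet_Ioo)
  have hne := nn_ex_ne_zero h0 h1 (Real.sin_pos_of_mem_Ioo hθ)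
  refine ContinuousAt.continuousWithinAt (ContinuousAt.div ?_ ?_ (by simpa using hne))
  · exact ((hn.mul h).add (hc.mul (Complex.continuous_conj.comp h))).continuousAt
  · exact (Complex.continuous_ofReal.comp h.norm).continuousAt

lemma exists_bound_of_diffContOnCl {F : ℂ → ℂ} (hF : DiffContOnCl ℂ F (Metric.ball 0 1)) :
    ∃ C : ℝ, ∀ z : ℂ, ‖z‖ ≤ 1 → ‖F z‖ ≤ C := by
  have hc : ContinuousOn F (Metric.closedBall 0 1) := by
    simpa [closure_ball _ one_ne_zero] using hF.continuousOn
  obtain ⟨C, hC⟩ := (isCompact_closedBall (0 : ℂ) 1).exists_bound_of_continuousOn hc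
  exact ⟨C, fun z hz => hC z (by simpa using hz)⟩

lemma integrable_symz_mul {μ : ℝ} (h0 : 0 ≤ μ) (h1 : μ < 1) {F : ℂ → ℂ}
    (hF : DiffContOnCl ℂ F (Metric.ball 0 1)) {h : ℝ → ℂ} (hh : Integrable h halfCircle) :
    Integrable (fun θ => symz μ F θ * h θ) halfCircle := by
  have hc : ContinuousOn F (Metric.closedBall 0 1) := by
    simpa [closure_ball _ one_ne_zero] using hF.continuousOn
  obtain ⟨C, hC⟩ := exists_bound_of_diffContOnCl hF
  exact hh.bdd_mul (aestronglyMeasurable_symz h0 h1 hc)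
    (Eventually.of_forall (norm_symz_le μ F hC))

lemma integral_symz_mul_eq_zero {μ : ℝ} (h0 : 0 ≤ μ) (h1 : μ < 1) {h : ℝ → ℂ}
    (hh : Integrable h halfCircle)
    (horth : ∀ j : ℕ, ∫ θ, symz μ (fun z => z ^ j) θ * h θ ∂halfCircle = 0) {F : ℂ → ℂ}
    (hF : DiffContOnCl ℂ F (Metric.ball 0 1)) : ∫ θ, symz μ F θ * h θ ∂halfCircle = 0 := by
  have hpow : ∀ j : ℕ, DiffContOnCl ℂ (fun z : ℂ => z ^ j) (Metric.ball 0 1) := fun j =>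
    (differentiable_pow j).diffContOnCl
  have hpd : ∀ P : Polynomial ℂ, DiffContOnCl ℂ (fun z => P.eval z) (Metric.ball 0 1) := fun P =>
    P.differentiable.diffContOnCl
  have hpoly : ∀ P : Polynomial ℂ, ∫ θ, symz μ (fun z => P.eval z) θ * h θ ∂halfCircle = 0 :=
    fun P => by
    have e : ∀ θ : ℝ, symz μ (fun z => P.eval z) θ * h θ =
        ∑ k ∈ Finset.range (P.natDegree + 1), P.coeff k * (symz μ (fun z => z ^ k) θ * h θ) :=
      fun θ => by
      simp only [symz, Polynomial.eval_eq_sum_range, Finset.sum_mul, ← Finset.sum_add_distrib,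
        Finset.sum_div]
      refine Finset.sum_congr rfl fun k _ => ?_
      ring
    simp only [e]
    rw [integral_finsetSum _ fun k _ => (integrable_symz_mul h0 h1 (hpow k) hh).const_mul _]
    simp only [integral_const_mul, horth, mul_zero, Finset.sum_const_zero]
  refine eq_zero_of_forall_norm_le (C := 2 * ∫ θ, ‖h θ‖ ∂halfCircle)
    (mul_nonneg zero_le_two (integral_nonneg fun _ => norm_nonneg _)) fun ε hε => ?_
  obtain ⟨P, hP⟩ := exists_polynomial_near_of_diffContOnCl hF hε
  have e : ∫ θ, symz μ F θ * h θ ∂halfCircle =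
      ∫ θ, symz μ (fun z => F z - P.eval z) θ * h θ ∂halfCircle := by
    rw [← sub_zero (∫ θ, symz μ F θ * h θ ∂halfCircle), ← hpoly P,
      ← integral_sub (integrable_symz_mul h0 h1 hF hh) (integrable_symz_mul h0 h1 (hpd P) hh)]
    refine integral_congr_ae (Eventually.of_forall fun θ => ?_)
    simp only [symz]
    ring
  rw [e, ← mul_assoc, ← integral_const_mul]
  refine norm_integral_le_of_norm_le (hh.norm.const_mul _) (Eventually.of_forall fun θ => ?_)
  rw [norm_mul, mul_comm ε]
  exact mul_le_mul_of_nonneg_right (norm_symz_le μ _ hP θ) (norm_nonneg _)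

lemma symz_pow_mul_dd {μ : ℝ} (h0 : 0 ≤ μ) (h1 : μ < 1) (j : ℕ) {θ : ℝ} (hθ : 0 < Real.sin θ) :
    symz μ (fun z => z ^ j * dd μ z) θ =
      ((Real.sin ((j + 1 : ℕ) * θ) : ℝ) : ℂ) * (2 * (‖dd μ (ex θ)‖ : ℂ)) := by
  have hne : (‖nn μ (ex θ)‖ : ℂ) ≠ 0 := by simpa using nn_ex_ne_zero h0 h1 hθ
  have hnd : ‖nn μ (ex θ)‖ * ‖dd μ (ex θ)‖ = 2 * Real.sin θ := by
    rw [← norm_mul, nn_mul_dd, one_sub_ex_sq]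
    simp only [norm_mul, norm_neg, Complex.norm_I, norm_ex, Complex.norm_real,
      Real.norm_of_nonneg hθ.le, Complex.norm_ofNat]
    ring
  have hnd' := congrArg (fun x : ℝ => (x : ℂ)) hnd
  have him : (ex θ ^ (j + 1)).im = Real.sin ((j + 1 : ℕ) * θ) := by
    rw [← ex_im, ex, ex, ← Complex.exp_nat_mul]
    congr 2
    push_cast
    ring
  have hz : ex θ ^ (j + 1) - (starRingEnd ℂ) (ex θ) ^ (j + 1) =
      2 * Complex.I * (Real.sin ((j + 1 : ℕ) * θ) : ℝ) := by
    rw [← map_pow, Complex.sub_conj, him]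
    push_cast
    ring
  rw [symz, div_eq_iff hne, dd_conj h0 h1 (norm_ex θ).le]
  have e1 : ex θ ^ j * dd μ (ex θ) * nn μ (ex θ) =
      ex θ ^ j * (-2 * Complex.I * ex θ * (Real.sin θ : ℝ)) := by
    rw [← one_sub_ex_sq, ← nn_mul_dd μ]
    ring
  have e2 : (starRingEnd ℂ) (ex θ) ^ j * (starRingEnd ℂ) (dd μ (ex θ)) *
      (starRingEnd ℂ) (nn μ (ex θ)) =
      (starRingEnd ℂ) (ex θ) ^ j * (2 * Complex.I * (starRingEnd ℂ) (ex θ) * (Real.sin θ : ℝ)) := by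
    have := congrArg (starRingEnd ℂ) e1
    simp only [map_mul, map_pow, map_neg, Complex.conj_I, Complex.conj_ofReal, map_ofNat] at this
    rw [this]
    ring
  rw [e1, e2]
  push_cast at hnd' hz ⊢
  linear_combination (-2 * Complex.I * Complex.sin θ) * hz -
    2 * Complex.sin (((j : ℂ) + 1) * θ) * hnd' -
    4 * Complex.sin θ * Complex.sin (((j : ℂ) + 1) * θ) * Complex.I_sq

/-- The functions `Re (z^j n(z)) / |n(z)|` are total in `L²(0, π)`. -/
lemma ae_eq_zero_of_integral_symz {μ : ℝ} (h0 : 0 ≤ μ) (h1 : μ < 1) {h : ℝ → ℂ}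
    (hh : Integrable h halfCircle)
    (horth : ∀ j : ℕ, ∫ θ, symz μ (fun z => z ^ j) θ * h θ ∂halfCircle = 0) :
    ∀ᵐ θ ∂halfCircle, h θ = 0 := by
  have hdc : Continuous fun θ => dd μ (ex θ) := by
    have : ContinuousOn (dd μ) (Metric.closedBall 0 1) := by
      simpa [closure_ball _ one_ne_zero] using (diffContOnCl_dd h0 h1).continuousOn
    exact this.comp_continuous continuous_ex fun θ => by simp [norm_ex]
  obtain ⟨C, hC⟩ := exists_bound_of_diffContOnCl (diffContOnCl_dd h0 h1)
  have hf : Integrable (fun θ => (2 * (‖dd μ (ex θ)‖ : ℂ)) * h θ) halfCircle := by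
    refine hh.bdd_mul (c := 2 * C) (Continuous.aestronglyMeasurable ?_)
      (Eventually.of_forall fun θ => ?_)
    · exact continuous_const.mul (Complex.continuous_ofReal.comp hdc.norm)
    · simpa using hC _ (norm_ex θ).le
  have hz := ae_eq_zero_of_integral_sin hf fun j => by
    rcases j with _ | j
    · simp
    have hF : DiffContOnCl ℂ (fun z => z ^ j * dd μ z) (Metric.ball 0 1) := by
      simpa only [smul_eq_mul] using
        (differentiable_pow (𝕜 := ℂ) j).diffContOnCl.smul (diffContOnCl_dd h0 h1)
    rw [← integral_symz_mul_eq_zero h0 h1 hh horth hF]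
    refine integral_congr_ae ?_
    filter_upwards [ae_halfCircle_sin_pos] with θ hθ
    rw [symz_pow_mul_dd h0 h1 j hθ]
    ring
  filter_upwards [hz, ae_halfCircle_sin_pos] with θ h2 hθ
  refine (mul_eq_zero.1 h2).resolve_left ?_
  have : dd μ (ex θ) ≠ 0 := by
    intro h3
    have h4 := nn_mul_dd μ (ex θ)
    rw [h3, one_sub_ex_sq, mul_zero] at h4
    simp [ex_ne_zero] at h4
    exact hθ.ne' (by exact_mod_cast h4)
  simpa using this

lemma integral_halfCircle (f : ℝ → ℂ) :
    ∫ θ, f θ ∂halfCircle = ∫ θ in (0 : ℝ)..Real.pi, f θ := by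
  rw [intervalIntegral.integral_of_le Real.pi_pos.le, integral_Ioc_eq_integral_Ioo]

lemma inner_toLp {f g : ℝ → ℂ} (hf : MemLp f 2 halfCircle) (hg : MemLp g 2 halfCircle) :
    ⟪hf.toLp f, hg.toLp g⟫_ℂ = ∫ θ, (starRingEnd ℂ) (f θ) * g θ ∂halfCircle := by
  rw [L2.inner_def]
  refine integral_congr_ae ?_
  filter_upwards [hf.coeFn_toLp, hg.coeFn_toLp] with θ h1 h2
  rw [h1, h2, RCLike.inner_apply, mul_comm]

/-- The normalized function `√(2/π) Re (z^j n(z)) / |n(z)|`. -/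
def rfun (μ : ℝ) (j : ℕ) (θ : ℝ) : ℂ :=
  ((1 / Real.sqrt (2 * Real.pi) : ℝ) : ℂ) * symz μ (fun z => z ^ j) θ

/-- The normalized function `|n(z)| (2 cos θ)^l / √(2π)`. -/
def pfun (μ : ℝ) (l : ℕ) (θ : ℝ) : ℂ :=
  ((1 / Real.sqrt (2 * Real.pi) : ℝ) : ℂ) *
    ((‖nn μ (ex θ)‖ * (2 * Real.cos θ) ^ l : ℝ) : ℂ)

lemma one_div_sqrt_two_pi_mul_self : ((1 / Real.sqrt (2 * Real.pi) : ℝ) : ℂ) *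
    ((1 / Real.sqrt (2 * Real.pi) : ℝ) : ℂ) = 1 / (2 * Real.pi) := by
  have := Real.pi_pos
  rw [← Complex.ofReal_mul, div_mul_div_comm, Real.mul_self_sqrt (by positivity)]
  push_cast
  ring

lemma memLp_rfun {μ : ℝ} (h0 : 0 ≤ μ) (h1 : μ < 1) (j : ℕ) : MemLp (rfun μ j) 2 halfCircle := by
  have h := aestronglyMeasurable_symz h0 h1 (F := fun z => z ^ j) (continuous_pow j).continuousOn
  refine MemLp.const_mul (MemLp.of_bound h (2 * 1) (Eventually.of_forall ?_)) _
  refine norm_symz_le μ _ fun z hz => ?_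
  rw [norm_pow]
  exact pow_le_one₀ (norm_nonneg z) hz

lemma continuous_pfun {μ : ℝ} (h0 : 0 ≤ μ) (h1 : μ < 1) (l : ℕ) : Continuous (pfun μ l) := by
  have h := continuous_nn_ex h0 h1
  unfold pfun
  fun_prop

lemma memLp_pfun {μ : ℝ} (h0 : 0 ≤ μ) (h1 : μ < 1) (l : ℕ) : MemLp (pfun μ l) 2 halfCircle := by
  have h := continuous_pfun h0 h1 l
  obtain ⟨C, hC⟩ := isCompact_Icc.exists_bound_of_continuousOn (s := Set.Icc 0 Real.pi)
    h.continuousOn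
  refine MemLp.of_bound h.aestronglyMeasurable C ?_
  filter_upwards [ae_restrict_mem measurableSet_Ioo] with θ hθ
  exact hC θ ⟨hθ.1.le, hθ.2.le⟩

lemma conj_symz_pow (μ : ℝ) (j : ℕ) (θ : ℝ) :
    (starRingEnd ℂ) (symz μ (fun z => z ^ j) θ) = symz μ (fun z => z ^ j) θ := by
  simp [symz, add_comm]

lemma conj_rfun (μ : ℝ) (j : ℕ) (θ : ℝ) : (starRingEnd ℂ) (rfun μ j θ) = rfun μ j θ := by
  rw [rfun, map_mul, conj_symz_pow, Complex.conj_ofReal]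

lemma conj_pfun (μ : ℝ) (l : ℕ) (θ : ℝ) : (starRingEnd ℂ) (pfun μ l θ) = pfun μ l θ := by
  rw [pfun, map_mul, Complex.conj_ofReal, Complex.conj_ofReal]

lemma symz_mul_symz {μ : ℝ} (h0 : 0 ≤ μ) (h1 : μ < 1) (j k : ℕ) {θ : ℝ} (hθ : 0 < Real.sin θ) :
    symz μ (fun z => z ^ j) θ * symz μ (fun z => z ^ k) θ =
      (uu μ (j + k) θ + (starRingEnd ℂ) (uu μ (j + k) θ)) +
        ((2 * Real.cos (((j : ℝ) - k) * θ) : ℝ) : ℂ) := by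
  set z := ex θ with hz
  set N := nn μ z with hN
  set zc := (starRingEnd ℂ) z with hzc
  set Nc := (starRingEnd ℂ) N with hNc
  have hne : (‖N‖ : ℂ) ≠ 0 := by simpa using nn_ex_ne_zero h0 h1 hθ
  have hNN : N * Nc = (‖N‖ : ℂ) ^ 2 := by
    rw [hNc, Complex.mul_conj, Complex.normSq_eq_norm_sq]
    push_cast
    rfl
  have hsq : uu μ (j + k) θ * (‖N‖ : ℂ) ^ 2 = z ^ (j + k) * N ^ 2 := by
    rw [hN, hz, nn_ex_sq h0 h1 hθ, uu, ← kap_ex h0 h1 hθ]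
    push_cast
    ring
  have hsqc : (starRingEnd ℂ) (uu μ (j + k) θ) * (‖N‖ : ℂ) ^ 2 = zc ^ (j + k) * Nc ^ 2 := by
    have := congrArg (starRingEnd ℂ) hsq
    simpa only [map_mul, map_pow, Complex.conj_ofReal] using this
  have hcos : z ^ j * zc ^ k + zc ^ j * z ^ k = ((2 * Real.cos (((j : ℝ) - k) * θ) : ℝ) : ℂ) := by
    have e : z ^ j * zc ^ k = ex (((j : ℝ) - k) * θ) := by
      rw [hzc, hz, ← ex_neg, ex, ex, ex, ← Complex.exp_nat_mul, ← Complex.exp_nat_mul,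
        ← Complex.exp_add]
      congr 1
      push_cast
      ring
    have e2 : zc ^ j * z ^ k = (starRingEnd ℂ) (z ^ j * zc ^ k) := by
      simp [hzc]
    rw [e2, e, Complex.add_conj, ex_re]
  rw [← hcos, symz, symz, div_mul_div_comm, div_eq_iff (mul_ne_zero hne hne)]
  simp only [← hz, ← hN, ← hzc, ← hNc]
  linear_combination (z ^ j * zc ^ k + zc ^ j * z ^ k) * hNN - hsq - hsqc

lemma integral_cos_int_mul (m : ℤ) :
    ∫ θ in (0 : ℝ)..Real.pi, Real.cos (m * θ) = if m = 0 then Real.pi else 0 := by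
  split_ifs with h
  · simp [h]
  · have hm : (m : ℝ) ≠ 0 := by exact_mod_cast h
    rw [intervalIntegral.integral_comp_mul_left (fun x => Real.cos x) hm, integral_cos]
    simp [Real.sin_int_mul_pi]

lemma inner_rfun {μ : ℝ} (h0 : 0 ≤ μ) (h1 : μ < 1) (j k : ℕ) :
    ⟪(memLp_rfun h0 h1 j).toLp, (memLp_rfun h0 h1 k).toLp⟫_ℂ =
      (if j = k then 1 else 0) +
        (((1 / Real.pi) * (∫ θ in (0 : ℝ)..Real.pi, uu μ (j + k) θ).re : ℝ) : ℂ) := by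
  have hpi := Real.pi_pos
  have hpi' : (Real.pi : ℂ) ≠ 0 := by exact_mod_cast hpi.ne'
  have hu := continuous_uu h0 h1 (j + k)
  have hcu : Continuous fun θ => (starRingEnd ℂ) (uu μ (j + k) θ) := Complex.continuous_conj.comp hu
  have hconj : ∫ θ in (0 : ℝ)..Real.pi, (starRingEnd ℂ) (uu μ (j + k) θ) =
      (starRingEnd ℂ) (∫ θ in (0 : ℝ)..Real.pi, uu μ (j + k) θ) := by
    rw [← integral_halfCircle, ← integral_halfCircle, integral_conj]
  rw [inner_toLp]
  have e : ∫ θ, (starRingEnd ℂ) (rfun μ j θ) * rfun μ k θ ∂halfCircle =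
      ∫ θ, (1 / (2 * Real.pi) : ℂ) * ((uu μ (j + k) θ + (starRingEnd ℂ) (uu μ (j + k) θ)) +
        ((2 * Real.cos (((j - k : ℤ) : ℝ) * θ) : ℝ) : ℂ)) ∂halfCircle := by
    refine integral_congr_ae ?_
    filter_upwards [ae_halfCircle_sin_pos] with θ hθ
    have hs := symz_mul_symz h0 h1 j k hθ
    push_cast at hs ⊢
    rw [conj_rfun, rfun, rfun, ← hs, ← one_div_sqrt_two_pi_mul_self]
    ring
  have hucu : Continuous fun θ => uu μ (j + k) θ + (starRingEnd ℂ) (uu μ (j + k) θ) := hu.add hcu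
  rw [e, integral_const_mul, integral_halfCircle, intervalIntegral.integral_add
      (hucu.intervalIntegrable _ _) (Continuous.intervalIntegrable (by fun_prop) _ _),
    intervalIntegral.integral_add (hu.intervalIntegrable _ _) (hcu.intervalIntegrable _ _),
    hconj, Complex.add_conj, intervalIntegral.integral_ofReal,
    intervalIntegral.integral_const_mul, integral_cos_int_mul]
  have hjk : ((j : ℤ) - k = 0) ↔ j = k := by omega
  simp only [hjk]
  split_ifs
  · push_cast
    field_simp
    ring
  · push_cast
    field_simp
    ring

lemma inner_rfun_pfun {μ : ℝ} (h0 : 0 ≤ μ) (h1 : μ < 1) {j l : ℕ} (hlj : l ≤ j) :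
    ⟪(memLp_rfun h0 h1 j).toLp, (memLp_pfun h0 h1 l).toLp⟫_ℂ = if l = j then 1 else 0 := by
  have hpi := Real.pi_pos
  set G : ℂ → ℂ := fun z => z ^ (j - l) * (1 + z ^ 2) ^ l * nn μ z with hG
  have hGd : DiffContOnCl ℂ G (Metric.ball 0 |1|) := by
    rw [abs_one]
    have hd : Differentiable ℂ fun z : ℂ => z ^ (j - l) * (1 + z ^ 2) ^ l := by fun_prop
    simpa only [smul_eq_mul] using hd.diffContOnCl.smul (diffContOnCl_nn h0 h1)
  have havg := hGd.circleAverage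
  have hGex : ∀ θ : ℝ, G (ex θ) = ex θ ^ j * nn μ (ex θ) * ((2 * Real.cos θ : ℝ) : ℂ) ^ l :=
    fun θ => by
    have hc : (((2 * Real.cos θ : ℝ) : ℂ)) = ex θ + (starRingEnd ℂ) (ex θ) := by
      rw [Complex.add_conj, ex_re]
    have h2 : 1 + ex θ ^ 2 = ex θ * ((2 * Real.cos θ : ℝ) : ℂ) := by
      rw [hc]
      linear_combination -ex_mul_conj θ
    obtain ⟨d, rfl⟩ := Nat.exists_eq_add_of_le hlj
    simp only [hG, h2, Nat.add_sub_cancel_left]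
    rw [mul_pow]
    ring
  have hGc : Continuous fun θ => G (ex θ) := by
    have := continuous_nn_ex h0 h1
    have h3 := continuous_ex
    simp only [hGex]
    fun_prop
  have hGconj : ∀ θ : ℝ, G (ex (2 * Real.pi - θ)) = (starRingEnd ℂ) (G (ex θ)) := fun θ => by
    rw [ex_two_pi_sub]
    simp only [hG, map_mul, map_pow, map_add, map_one, nn_conj h0 h1 (norm_ex θ).le]
  have hcirc : (fun θ => G (circleMap 0 1 θ)) = fun θ => G (ex θ) := by
    funext θ
    simp [circleMap, ex, mul_comm]
  rw [Real.circleAverage_def, hcirc] at havg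
  have hr : ∫ θ in Real.pi..(2 * Real.pi), G (ex θ) =
      ∫ θ in (0 : ℝ)..Real.pi, (starRingEnd ℂ) (G (ex θ)) := by
    have := intervalIntegral.integral_comp_sub_left (a := 0) (b := Real.pi)
      (fun θ => G (ex θ)) (2 * Real.pi)
    rw [sub_zero, show 2 * Real.pi - Real.pi = Real.pi by ring] at this
    rw [← this]
    simp only [hGconj]
  rw [inner_toLp]
  have e : ∫ θ, (starRingEnd ℂ) (rfun μ j θ) * pfun μ l θ ∂halfCircle =
      ∫ θ, (1 / (2 * Real.pi) : ℂ) * (G (ex θ) + (starRingEnd ℂ) (G (ex θ))) ∂halfCircle := by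
    refine integral_congr_ae ?_
    filter_upwards [ae_halfCircle_sin_pos] with θ hθ
    have hne : (‖nn μ (ex θ)‖ : ℂ) ≠ 0 := by simpa using nn_ex_ne_zero h0 h1 hθ
    rw [conj_rfun, rfun, pfun, ← one_div_sqrt_two_pi_mul_self, hGex, symz]
    simp only [map_mul, map_pow, Complex.conj_ofReal]
    push_cast
    field_simp
  have hGi := hGc.intervalIntegrable (μ := volume)
  have hGci : Continuous fun θ => (starRingEnd ℂ) (G (ex θ)) := Complex.continuous_conj.comp hGc
  rw [e, integral_const_mul, integral_halfCircle,
    intervalIntegral.integral_add (hGi _ _) (hGci.intervalIntegrable _ _), ← hr,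
    intervalIntegral.integral_add_adjacent_intervals (hGi _ _) (hGi _ _)]
  have e2 : (1 / (2 * Real.pi) : ℂ) * ∫ θ in (0 : ℝ)..(2 * Real.pi), G (ex θ) = G 0 := by
    rw [← havg, Complex.real_smul]
    push_cast
    ring
  rw [e2, hG]
  simp only [nn_zero]
  rcases hlj.eq_or_lt with rfl | hlt
  · simp
  · simp [hlt.ne, (Nat.sub_pos_of_lt hlt).ne']

lemma inner_pfun {μ ρ : ℝ} (h0 : 0 ≤ μ) (h1 : μ < 1) (hρ : ρ * (1 + μ ^ 2) = 2 * μ)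
    (hρ0 : 0 ≤ ρ) (hρ1 : ρ < 1) (m l : ℕ) :
    ⟪(memLp_pfun h0 h1 m).toLp, (memLp_pfun h0 h1 l).toLp⟫_ℂ =
      (bmomR (fun x => Real.sqrt ((1 + ρ * x) / (1 - ρ * x))) (m + l) : ℂ) := by
  set g : ℝ → ℝ := fun x => Real.sqrt ((1 + ρ * x) / (1 - ρ * x)) * (2 * x) ^ (m + l) with hg
  have hgc : ContinuousOn g (Real.cos '' Set.uIcc 0 Real.pi) := by
    have hne : ∀ x ∈ Real.cos '' Set.uIcc 0 Real.pi, 1 - ρ * x ≠ 0 := by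
      rintro _ ⟨θ, -, rfl⟩
      have := mul_le_of_le_one_right hρ0 (Real.cos_le_one θ)
      exact (by linarith : 0 < 1 - ρ * Real.cos θ).ne'
    refine ContinuousOn.mul (ContinuousOn.sqrt ?_) (by fun_prop)
    exact ContinuousOn.div (by fun_prop) (by fun_prop) hne
  have hsub := intervalIntegral.integral_comp_mul_deriv'' (a := 0) (b := Real.pi)
    (f := Real.cos) (f' := fun θ => -Real.sin θ) (g := g) Real.continuous_cos.continuousOn
    (fun θ _ => (Real.hasDerivAt_cos θ).hasDerivWithinAt) (by fun_prop) hgc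
  rw [Real.cos_zero, Real.cos_pi, intervalIntegral.integral_symm (-1) 1] at hsub
  rw [inner_toLp]
  have e : ∫ θ, (starRingEnd ℂ) (pfun μ m θ) * pfun μ l θ ∂halfCircle =
      ∫ θ, (-(1 / Real.pi) : ℂ) * (((g ∘ Real.cos) θ * -Real.sin θ : ℝ) : ℂ) ∂halfCircle := by
    refine integral_congr_ae ?_
    filter_upwards [ae_halfCircle_sin_pos] with θ hθ
    have hs := congrArg (fun x : ℝ => (x : ℂ)) (sq_norm_nn_ex_eq_sqrt h0 h1 hρ hθ.le)
    have hpp : pfun μ m θ * pfun μ l θ = (1 / (2 * Real.pi) : ℂ) *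
        ((‖nn μ (ex θ)‖ ^ 2 : ℝ) : ℂ) * ((2 * Real.cos θ : ℝ) : ℂ) ^ (m + l) := by
      rw [pfun, pfun, ← one_div_sqrt_two_pi_mul_self]
      push_cast
      ring
    rw [conj_pfun, hpp, hs]
    simp only [hg, Function.comp_apply]
    push_cast
    field_simp
  rw [e, integral_const_mul, integral_halfCircle, intervalIntegral.integral_ofReal, hsub, bmomR]
  push_cast
  ring

lemma dense_span_rfun {μ : ℝ} (h0 : 0 ≤ μ) (h1 : μ < 1) :
    (Submodule.span ℂ (Set.range fun j => (memLp_rfun h0 h1 j).toLp)).topologicalClosure = ⊤ := by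
  rw [Submodule.topologicalClosure_eq_top_iff, Submodule.eq_bot_iff]
  intro h hh
  have hi : Integrable h halfCircle := (Lp.memLp h).integrable one_le_two
  have hpi := Real.pi_pos
  have hc : ((1 / Real.sqrt (2 * Real.pi) : ℝ) : ℂ) ≠ 0 :=
    Complex.ofReal_ne_zero.2 (by positivity)
  have hz := ae_eq_zero_of_integral_symz h0 h1 hi fun j => by
    have hj := (Submodule.mem_orthogonal _ _).1 hh _ (Submodule.subset_span ⟨j, rfl⟩)
    simp only at hj
    rw [← Lp.toLp_coeFn h (Lp.memLp h), inner_toLp] at hj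
    simp only [conj_rfun] at hj
    simp only [rfun, mul_assoc] at hj
    rw [integral_const_mul] at hj
    exact (mul_eq_zero.1 hj).resolve_left hc
  exact (Lp.eq_zero_iff_ae_eq_zero).2 hz

/-- Let `α > 0`, `n > α/π`, `μ_{α,n} = (1 − sin(α/(2n)))/cos(α/(2n))`,
`c₊(z) = exp(½ Log((1+μ_{α,n}z)/(1−μ_{α,n}z)))`,
`ψ_{α,n}(e^{iθ}) = c₊(e^{−iθ}) c₊(e^{iθ})⁻¹ χ(e^{iθ})` and
`b_{α,n}(x) = √((1+ρ_{α,n}x)/(1−ρ_{α,n}x))` with `ρ_{α,n} = cos(α/(2n))`.  Then any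
bounded operator `I + H(ψ_{α,n})` on ℓ²(ℕ) is invertible and
`det H_n[b_{α,n}] = det[Pₙ (I + H(ψ_{α,n}))⁻¹ Pₙ]`. -/
theorem stmt13 (α : ℝ) (hα : 0 < α) (n : ℕ) (hn : α / Real.pi < n)
    (μ : ℝ) (hμ : μ = (1 - Real.sin (α / (2 * n))) / Real.cos (α / (2 * n)))
    (cplus : ℂ → ℂ)
    (hcplus : ∀ z : ℂ, cplus z =
      Complex.exp ((1 / 2 : ℂ) * Complex.log ((1 + μ * z) / (1 - μ * z))))
    (ψ : ℝ → ℂ)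
    (hψ : ∀ θ : ℝ, ψ θ =
      cplus (Complex.exp (-(Complex.I * θ))) *
        (cplus (Complex.exp (Complex.I * θ)))⁻¹ * chi θ)
    (A : l2 →L[ℂ] l2)
    (hA : ∀ j k : ℕ, ent A j k =
      (if j = k then 1 else 0) + fc ψ ((j : ℤ) + k + 1)) :
    ∃ A' : l2 →L[ℂ] l2, A ∘L A' = 1 ∧ A' ∘L A = 1 ∧
      ((Matrix.of fun j k : Fin n =>
          bmomR (fun x => Real.sqrt ((1 + Real.cos (α / (2 * n)) * x) /
            (1 - Real.cos (α / (2 * n)) * x))) ((j : ℕ) + k)).det : ℂ)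
        = (Matrix.of fun j k : Fin n => ent A' j k).det := by
  obtain rfl : cplus = cp μ := funext hcplus
  have hpi := Real.pi_pos
  have hn0 : (0 : ℝ) < n := (by positivity : 0 < α / Real.pi).trans hn
  set β : ℝ := α / (2 * n) with hβ
  have hβ0 : 0 < β := by positivity
  have hβ1 : β < Real.pi / 2 := by
    rw [div_lt_iff₀ hpi] at hn
    rw [hβ, div_lt_iff₀ (by positivity)]
    linarith
  have hc : 0 < Real.cos β := Real.cos_pos_of_mem_Ioo ⟨by linarith, hβ1⟩
  have hs : 0 < Real.sin β := Real.sin_pos_of_pos_of_lt_pi hβ0 (by linarith)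
  have hcs := Real.sin_sq_add_cos_sq β
  have hc1 : Real.cos β < 1 := by nlinarith
  have h0 : 0 ≤ μ := by
    rw [hμ]
    exact div_nonneg (by linarith [Real.sin_le_one β]) hc.le
  have h1 : μ < 1 := by
    rw [hμ, div_lt_one hc]
    nlinarith
  have hρ : Real.cos β * (1 + μ ^ 2) = 2 * μ := by
    rw [hμ]
    field_simp
    linear_combination hcs
  set h : ℕ → ℂ := fun m =>
    (((1 / Real.pi) * (∫ θ in (0 : ℝ)..Real.pi, uu μ m θ).re : ℝ) : ℂ) with hh
  have hA' : ∀ j k : ℕ, ent A j k = (if j = k then 1 else 0) + h (j + k) := fun j k => by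
    have hf := fc_eq_re_integral h0 h1 ψ hψ (j + k)
    rw [Nat.cast_add] at hf
    rw [hA, hf]
  have hge := sq_norm_le_of_forall_sum A h hA' fun s c => hankel_re_nonneg h0 h1 s c
  obtain ⟨⟨_, A', hAA', hA'A⟩, rfl⟩ := isUnit_of_sq_norm_le A hge
  refine ⟨A', hAA', hA'A, ?_⟩
  have hdet := det_gram_eq_det_inverse _ A' hA'A hge
    (fun j => (memLp_rfun h0 h1 j).toLp) (fun j k => by rw [hA', inner_rfun h0 h1])
    (dense_span_rfun h0 h1) (fun l => (memLp_pfun h0 h1 l).toLp)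
    (fun j l hlj => by rw [inner_rfun_pfun h0 h1 hlj.le, if_neg hlj.ne])
    (fun j => by rw [inner_rfun_pfun h0 h1 le_rfl, if_pos rfl]) n
  rw [← hdet, ← Complex.ofRealHom_eq_coe, RingHom.map_det]
  congr 1
  ext j k
  rw [Matrix.of_apply, inner_pfun h0 h1 hρ hc.le hc1]
  rfl

end
end

section
/- Let α > 0 and h_α(e^{iθ}) = exp( −α(1−e^{iθ})/(2(1+e^{iθ})) ) for θ ≠ π (a unimodular function on T). If A is a bounded linear operator on ℓ²(ℕ) with ⟨e_j, A e_k⟩ = [h_α]_{j+k+1} for all j,k ≥ 0 (i.e. A = H(h_α)), then A³ = A; in particular A² is idempotent. -/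
open Filter MeasureTheory
open scoped InnerProductSpace

noncomputable section

/-- The function `h_α(e^{iθ}) = exp(−α(1−e^{iθ})/(2(1+e^{iθ})))` on the circle. -/
def hFun (α : ℝ) (θ : ℝ) : ℂ :=
  Complex.exp (-(α : ℂ) * (1 - Complex.exp (Complex.I * θ)) /
    (2 * (1 + Complex.exp (Complex.I * θ))))

open scoped ComplexConjugate

/-- The singular inner function `z ↦ exp (-α (1 - z) / (2 (1 + z)))` on the unit disc. -/
def expMobius (α : ℝ) (z : ℂ) : ℂ :=
  Complex.exp (-(α : ℂ) * (1 - z) / (2 * (1 + z)))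

theorem hFun_eq_expMobius (α θ : ℝ) :
    hFun α θ = expMobius α (Complex.exp (Complex.I * θ)) := rfl

theorem norm_expMobius (α : ℝ) (z : ℂ) :
    ‖expMobius α z‖ =
      Real.exp (-(α / 2) * ((1 - Complex.normSq z) / Complex.normSq (1 + z))) := by
  rw [expMobius, Complex.norm_exp]
  congr 1
  have h : -(α : ℂ) * (1 - z) / (2 * (1 + z)) = ((-(α / 2) : ℝ) : ℂ) * ((1 - z) / (1 + z)) := by
    rw [mul_div_mul_comm]
    push_cast
    ring
  rw [h, Complex.re_ofReal_mul, Complex.div_re]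
  congr 1
  rw [← add_div]
  congr 1
  simp [Complex.normSq_apply]
  ring

theorem norm_expMobius_of_norm_eq_one (α : ℝ) {z : ℂ} (hz : ‖z‖ = 1) :
    ‖expMobius α z‖ = 1 := by
  simp [norm_expMobius, Complex.normSq_eq_norm_sq, hz]

theorem norm_expMobius_le_one {α : ℝ} (hα : 0 ≤ α) {z : ℂ} (hz : ‖z‖ ≤ 1) :
    ‖expMobius α z‖ ≤ 1 := by
  rw [norm_expMobius, Real.exp_le_one_iff, neg_mul, neg_nonpos]
  have h : 0 ≤ 1 - Complex.normSq z := by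
    rw [Complex.normSq_eq_norm_sq]
    nlinarith [norm_nonneg z]
  have := Complex.normSq_nonneg (1 + z)
  positivity

theorem differentiableAt_expMobius (α : ℝ) {z : ℂ} (hz : 1 + z ≠ 0) :
    DifferentiableAt ℂ (expMobius α) z := by
  unfold expMobius
  have : 2 * (1 + z) ≠ 0 := mul_ne_zero two_ne_zero hz
  fun_prop (disch := assumption)

theorem one_add_ne_zero_of_norm_lt_one {z : ℂ} (hz : ‖z‖ < 1) : 1 + z ≠ 0 := by
  intro h
  rw [← neg_eq_iff_add_eq_zero.2 h] at hz
  simp at hz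

theorem measurable_expMobius (α : ℝ) : Measurable (expMobius α) := by
  unfold expMobius
  fun_prop

theorem expMobius_conj (α : ℝ) (z : ℂ) : expMobius α (conj z) = conj (expMobius α z) := by
  simp [expMobius, ← Complex.exp_conj, Complex.conj_ofNat]

theorem norm_exp_I_mul (θ : ℝ) : ‖Complex.exp (Complex.I * θ)‖ = 1 := by
  rw [mul_comm, Complex.norm_exp_ofReal_mul_I]

theorem ae_one_add_exp_I_mul_ne_zero :
    ∀ᵐ θ : ℝ, θ ∈ Set.uIoc 0 (2 * Real.pi) → 1 + Complex.exp (Complex.I * θ) ≠ 0 := by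
  have h : ∀ᵐ θ : ℝ, θ ≠ Real.pi := by simp [ae_iff]
  filter_upwards [h] with θ hθ hmem h0
  rw [Set.uIoc_of_le (by positivity)] at hmem
  have hcos : Real.cos θ = -1 := by
    have := congrArg Complex.re h0
    simp [Complex.exp_re] at this
    linarith
  have hcos' : Real.cos (θ - Real.pi) = 1 := by simp [hcos]
  have := (Real.cos_eq_one_iff_of_lt_of_lt (by linarith [hmem.1, Real.pi_pos])
    (by linarith [hmem.2, Real.pi_pos])).1 hcos'
  exact hθ (by linarith)

theorem integral_expMobius_mul_exp {α r : ℝ} (hr0 : 0 < r) (hr1 : r < 1) (n : ℕ) :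
    ∫ θ in (0:ℝ)..(2 * Real.pi), expMobius α (r * Complex.exp (Complex.I * θ)) *
      Complex.exp (Complex.I * ((n + 1 : ℕ) : ℂ) * θ) = 0 := by
  have hd : DifferentiableOn ℂ (fun z => z ^ n * expMobius α z) (Metric.closedBall 0 r) := by
    intro z hz
    have hz' : ‖z‖ < 1 := by
      rw [mem_closedBall_zero_iff] at hz
      linarith
    exact ((differentiableAt_pow n).mul
      (differentiableAt_expMobius α (one_add_ne_zero_of_norm_lt_one hz'))).differentiableWithinAt
  have h := (hd.diffContOnCl_ball subset_rfl).circleIntegral_eq_zero hr0.le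
  rw [circleIntegral] at h
  have hc : (r : ℂ) ^ (n + 1) * Complex.I ≠ 0 :=
    mul_ne_zero (pow_ne_zero _ (by exact_mod_cast hr0.ne')) Complex.I_ne_zero
  refine (mul_eq_zero.1 ?_).resolve_left hc
  rw [← intervalIntegral.integral_const_mul, ← h]
  refine intervalIntegral.integral_congr fun θ _ => ?_
  have he : Complex.exp (Complex.I * ((n + 1 : ℕ) : ℂ) * θ) =
      Complex.exp (Complex.I * θ) ^ (n + 1) := by
    rw [← Complex.exp_nat_mul]
    congr 1
    ring
  simp only [deriv_circleMap, circleMap, zero_add, smul_eq_mul, he, mul_comm (θ : ℂ) Complex.I]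
  ring

theorem fc_hFun_of_neg {α : ℝ} (hα : 0 < α) {k : ℤ} (hk : k < 0) : fc (hFun α) k = 0 := by
  obtain ⟨n, rfl⟩ : ∃ n : ℕ, k = -((n + 1 : ℕ) : ℤ) := ⟨(-k - 1).toNat, by omega⟩
  have hlim : Tendsto (fun r : ℝ => ∫ θ in (0:ℝ)..(2 * Real.pi),
      expMobius α (r * Complex.exp (Complex.I * θ)) *
        Complex.exp (Complex.I * ((n + 1 : ℕ) : ℂ) * θ)) (nhdsWithin 1 (Set.Iio 1))
      (nhds (∫ θ in (0:ℝ)..(2 * Real.pi), expMobius α (Complex.exp (Complex.I * θ)) *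
        Complex.exp (Complex.I * ((n + 1 : ℕ) : ℂ) * θ))) := by
    have hIoo : ∀ᶠ r : ℝ in nhdsWithin 1 (Set.Iio 1), r ∈ Set.Ioo 0 1 :=
      Ioo_mem_nhdsLT zero_lt_one
    have hexp : ∀ θ : ℝ, ‖Complex.exp (Complex.I * ((n + 1 : ℕ) : ℂ) * θ)‖ = 1 := fun θ => by
      have := norm_exp_I_mul (((n + 1 : ℕ) : ℝ) * θ)
      rwa [Complex.ofReal_mul, ← mul_assoc, Complex.ofReal_natCast] at this
    refine intervalIntegral.tendsto_integral_filter_of_dominated_convergence (fun _ => 1)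
      ?_ ?_ intervalIntegrable_const ?_
    · refine Eventually.of_forall fun r => Measurable.aestronglyMeasurable ?_
      exact ((measurable_expMobius α).comp (by fun_prop)).mul (by fun_prop)
    · filter_upwards [hIoo] with r hr
      refine Eventually.of_forall fun θ _ => ?_
      rw [norm_mul, hexp, mul_one]
      refine norm_expMobius_le_one hα.le ?_
      rw [norm_mul, norm_exp_I_mul, mul_one, Complex.norm_real, Real.norm_of_nonneg hr.1.le]
      exact hr.2.le
    · filter_upwards [ae_one_add_exp_I_mul_ne_zero] with θ hθ hmem
      refine Tendsto.mul_const _ ?_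
      refine (differentiableAt_expMobius α (hθ hmem)).continuousAt.tendsto.comp ?_
      have : Continuous fun r : ℝ => (r : ℂ) * Complex.exp (Complex.I * θ) := by fun_prop
      have h1 := this.tendsto 1
      simp only [Complex.ofReal_one, one_mul] at h1
      exact h1.mono_left nhdsWithin_le_nhds
  have hzero : ∀ᶠ r : ℝ in nhdsWithin 1 (Set.Iio 1), ∫ θ in (0:ℝ)..(2 * Real.pi),
      expMobius α (r * Complex.exp (Complex.I * θ)) *
        Complex.exp (Complex.I * ((n + 1 : ℕ) : ℂ) * θ) = 0 := by
    filter_upwards [Ioo_mem_nhdsLT zero_lt_one] with r hr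
    exact integral_expMobius_mul_exp hr.1 hr.2 n
  have h0 := tendsto_nhds_unique hlim ((tendsto_congr' hzero).2 tendsto_const_nhds)
  rw [fc]
  refine mul_eq_zero_of_right _ ?_
  rw [← h0]
  refine intervalIntegral.integral_congr fun θ _ => ?_
  simp only [hFun_eq_expMobius]
  congr 2
  push_cast
  ring

theorem conj_fc_hFun (α : ℝ) (k : ℤ) : conj (fc (hFun α) k) = fc (hFun α) k := by
  rw [fc, map_mul, Complex.conj_ofReal]
  congr 1
  rw [← intervalIntegral.intervalIntegral_conj]
  have h := intervalIntegral.integral_comp_sub_left (a := 0) (b := 2 * Real.pi)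
    (fun θ : ℝ => hFun α θ * Complex.exp (-(Complex.I * k * θ))) (2 * Real.pi)
  rw [sub_self, sub_zero] at h
  rw [← h]
  refine intervalIntegral.integral_congr fun θ _ => ?_
  have h1 : Complex.exp (Complex.I * ((2 * Real.pi - θ : ℝ) : ℂ)) =
      conj (Complex.exp (Complex.I * θ)) := by
    rw [← Complex.exp_conj, Complex.exp_eq_exp_iff_exists_int]
    refine ⟨1, ?_⟩
    simp
    ring
  have h2 : Complex.exp (-(Complex.I * k * ((2 * Real.pi - θ : ℝ) : ℂ))) =
      conj (Complex.exp (-(Complex.I * k * θ))) := by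
    rw [← Complex.exp_conj, Complex.exp_eq_exp_iff_exists_int]
    refine ⟨-k, ?_⟩
    simp
    ring
  simp only [hFun_eq_expMobius, h1, h2, expMobius_conj, map_mul]

section Parseval

variable {T : ℝ} [hT : Fact (0 < T)]

theorem fourierCoeff_fourier_mul (g : AddCircle T → ℂ) (p l : ℤ) :
    fourierCoeff (fun x => fourier (-p) x * g x) l = fourierCoeff g (l + p) := by
  refine integral_congr_ae (Eventually.of_forall fun x => ?_)
  simp only [smul_eq_mul]
  rw [neg_add, fourier_add, mul_assoc]

theorem hasSum_conj_fourierCoeff_mul_of_norm_eq_one {g : AddCircle T → ℂ}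
    (hg : Measurable g) (hg1 : ∀ x, ‖g x‖ = 1) (p q : ℤ) :
    HasSum (fun l : ℤ => conj (fourierCoeff g (l + p)) * fourierCoeff g (l + q))
      (if p = q then 1 else 0) := by
  have hmem : ∀ m : ℤ, MemLp (fun x => fourier (-m) x * g x) 2 (@AddCircle.haarAddCircle T _) := by
    intro m
    refine MemLp.of_bound ?_ 1 (Eventually.of_forall fun x => ?_)
    · exact ((fourier (-m)).continuous.measurable.mul hg).aestronglyMeasurable
    · rw [norm_mul, hg1, fourier_apply, Circle.norm_coe, mul_one]
  have h := fourierBasis.hasSum_inner_mul_inner ((hmem p).toLp _) ((hmem q).toLp _)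
  have hcoeff : ∀ m l : ℤ, ⟪fourierBasis l, (hmem m).toLp _⟫_ℂ = fourierCoeff g (l + m) := by
    intro m l
    rw [← HilbertBasis.repr_apply_apply, fourierBasis_repr,
      fourierCoeff_congr_ae (hmem m).coeFn_toLp, fourierCoeff_fourier_mul]
  have hinner : ⟪(hmem p).toLp _, (hmem q).toLp _⟫_ℂ = if p = q then 1 else 0 := by
    have hf : fourierCoeff (fourier p : AddCircle T → ℂ) q = if p = q then 1 else 0 := by
      rw [fourierCoeff_fourier, Pi.single_apply]
      simp only [eq_comm]
    rw [← hf, L2.inner_def, fourierCoeff]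
    refine integral_congr_ae ?_
    filter_upwards [(hmem p).coeFn_toLp, (hmem q).coeFn_toLp] with x hp hq
    have hgg : g x * conj (g x) = 1 := by
      rw [Complex.mul_conj, Complex.normSq_eq_norm_sq, hg1]
      simp
    rw [RCLike.inner_apply, hp, hq]
    simp only [map_mul, smul_eq_mul, fourier_neg, Complex.conj_conj]
    linear_combination (fourier p x * conj (fourier q x)) * hgg
  rw [hinner] at h
  refine HasSum.congr_fun h fun l => ?_
  rw [← inner_conj_symm, hcoeff, hcoeff]

end Parseval

theorem hasSum_fc_hFun_mul (α : ℝ) (p q : ℤ) :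
    HasSum (fun l : ℤ => fc (hFun α) (l + p) * fc (hFun α) (l + q))
      (if p = q then 1 else 0) := by
  have : Fact (0 < 2 * Real.pi) := ⟨Real.two_pi_pos⟩
  let g : AddCircle (2 * Real.pi) → ℂ := fun x => expMobius α (fourier 1 x)
  have hg : Measurable g := (measurable_expMobius α).comp (fourier 1).continuous.measurable
  have hg1 : ∀ x, ‖g x‖ = 1 := fun x => norm_expMobius_of_norm_eq_one α (by
    rw [fourier_apply, Circle.norm_coe])
  have hcoeff : ∀ k, fourierCoeff g k = fc (hFun α) k := by
    intro k
    rw [fourierCoeff_eq_intervalIntegral g k 0, zero_add, fc, Complex.real_smul]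
    congr 1
    refine intervalIntegral.integral_congr fun θ _ => ?_
    have hpi : (Real.pi : ℂ) ≠ 0 := by exact_mod_cast Real.pi_ne_zero
    simp only [g, fourier_coe_apply, hFun_eq_expMobius, smul_eq_mul]
    rw [mul_comm]
    congr 3
    · push_cast
      field_simp
    · push_cast
      field_simp
  have h := hasSum_conj_fourierCoeff_mul_of_norm_eq_one hg hg1 p q
  simpa only [hcoeff, conj_fc_hFun] using h

theorem ent_eq_apply (A : l2 →L[ℂ] l2) (j k : ℕ) : ent A j k = A (ee k) j := by
  simp [ent, ee, lp.inner_single_left]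

theorem hasSum_ent_mul (A : l2 →L[ℂ] l2) (v : l2) (j : ℕ) :
    HasSum (fun k => ent A j k * v k) (A v j) := by
  have h := (innerSL ℂ (ee j) ∘L A).hasSum (lp.hasSum_single (by simp) v)
  have hj : (innerSL ℂ (ee j) ∘L A) v = A v j := by
    simp [ee, lp.inner_single_left]
  rw [hj] at h
  refine HasSum.congr_fun h fun k => ?_
  have hk : lp.single 2 k (v k) = v k • ee k := by
    rw [ee, ← lp.single_smul, smul_eq_mul, mul_one]
  rw [hk, map_smul, smul_eq_mul]
  exact mul_comm _ _

theorem eq_of_ent_eq {A B : l2 →L[ℂ] l2} (h : ∀ j k, ent A j k = ent B j k) : A = B := by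
  ext v j
  refine (hasSum_ent_mul A v j).unique ?_
  simpa only [h] using hasSum_ent_mul B v j

/-- If `c` is the sequence of Fourier coefficients of an inner function and is real, the Hankel
operator `A` with symbol sequence `c` satisfies `A ^ 3 = A`. -/
theorem comp_comp_self_of_hankel {c : ℤ → ℂ} (hneg : ∀ k < 0, c k = 0)
    (hc : ∀ p q : ℤ, HasSum (fun l : ℤ => c (l + p) * c (l + q)) (if p = q then 1 else 0))
    {A : l2 →L[ℂ] l2} (hA : ∀ j k : ℕ, ent A j k = c ((j : ℤ) + k + 1)) :
    A ∘L A ∘L A = A := by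
  have hsq : ∀ j k : ℕ, ent (A ∘L A) j k = (if j = k then 1 else 0) -
      ∑ i ∈ Finset.range (j + 1), c (j - i) * c (k - i) := by
    intro j k
    have h1 : HasSum (fun l : ℕ => c ((l : ℤ) + (j + 1)) * c ((l : ℤ) + (k + 1)))
        (ent (A ∘L A) j k) := by
      rw [ent_eq_apply]
      refine HasSum.congr_fun (hasSum_ent_mul A (A (ee k)) j) fun l => ?_
      rw [← ent_eq_apply, hA, hA]
      congr 2
      ring
    have h2 : HasSum (fun i : ℕ => c (-((i : ℤ) + 1) + (j + 1)) * c (-((i : ℤ) + 1) + (k + 1)))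
        (∑ i ∈ Finset.range (j + 1), c (j - i) * c (k - i)) := by
      have : ∀ i : ℕ, c (-((i : ℤ) + 1) + (j + 1)) * c (-((i : ℤ) + 1) + (k + 1)) =
          c (j - i) * c (k - i) := fun i => by congr 2 <;> ring
      simp only [this]
      refine hasSum_sum_of_ne_finset_zero fun i hi => ?_
      rw [Finset.mem_range] at hi
      rw [hneg _ (by omega), zero_mul]
    have h3 := HasSum.of_nat_of_neg_add_one
      (f := fun l : ℤ => c (l + (j + 1)) * c (l + (k + 1))) h1 h2
    have h4 := h3.unique (hc _ _)
    rw [eq_sub_iff_add_eq, h4]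
    simp
  refine eq_of_ent_eq fun j m => ?_
  have h1 := hasSum_ent_mul (A ∘L A) (A (ee m)) j
  have hval : ∀ k : ℕ, (A (ee m)) k = c ((k : ℤ) + m + 1) := fun k => by
    rw [← ent_eq_apply, hA]
  have h2 : HasSum (fun k : ℕ => (if j = k then 1 else 0) * c ((k : ℤ) + m + 1))
      (c ((j : ℤ) + m + 1)) := by
    convert! hasSum_ite_eq j (c ((j : ℤ) + m + 1)) using 2 with k
    by_cases hk : j = k
    · simp [hk]
    · simp [hk, Ne.symm hk]
  have h3 : ∀ i : ℕ, HasSum (fun k : ℕ => c ((k : ℤ) - i) * c ((k : ℤ) + m + 1)) 0 := by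
    intro i
    have h := hc (-i) (m + 1)
    rw [if_neg (by omega)] at h
    rw [← Function.Injective.hasSum_iff (Nat.cast_injective (R := ℤ))] at h
    · simpa only [Function.comp_def, ← sub_eq_add_neg, ← add_assoc] using h
    · intro l hl
      have : l < 0 := by
        by_contra! h0
        exact hl ⟨l.toNat, by simp [h0]⟩
      rw [hneg _ (by omega), zero_mul]
  have h4 : HasSum (fun k : ℕ => ∑ i ∈ Finset.range (j + 1),
      c (j - i) * (c ((k : ℤ) - i) * c ((k : ℤ) + m + 1))) 0 := by
    simpa using hasSum_sum (s := Finset.range (j + 1))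
      fun i _ => (h3 i).mul_left (c ((j : ℤ) - i))
  have h5 := h2.sub h4
  rw [sub_zero] at h5
  rw [hA, ent_eq_apply]
  refine h1.unique ?_
  refine HasSum.congr_fun h5 fun k => ?_
  rw [hsq, hval, sub_mul, Finset.sum_mul]
  simp only [mul_assoc]

/-- For `α > 0`, the Hankel operator `A = H(h_α)` on ℓ²(ℕ) satisfies `A³ = A`;
in particular `A²` is idempotent. -/
theorem stmt15 (α : ℝ) (hα : 0 < α) (A : l2 →L[ℂ] l2)
    (hA : ∀ j k : ℕ, ent A j k = fc (hFun α) ((j : ℤ) + k + 1)) :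
    A ∘L A ∘L A = A ∧ (A ∘L A) ∘L (A ∘L A) = A ∘L A := by
  have h := comp_comp_self_of_hankel (c := fc (hFun α)) (fun _ => fc_hFun_of_neg hα)
    (hasSum_fc_hFun_mul α) hA
  refine ⟨h, ?_⟩
  rw [ContinuousLinearMap.comp_assoc, h]


end
end
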